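/- arXiv:1205.1458 — 5 statements merged into one kernel-verified Lean document; each statement's English description precedes it below -/
import Mathlib

section
/- Let K be a field of characteristic different from 2, let L be a separable quadratic field extension of K with nontrivial K-automorphism ρ, let E be an n-dimensional finite étale commutative L-algebra, and let σ be a ring involution of E that is ρ-semilinear (σ(λx) = ρ(λ)σ(x) for λ ∈ L, x ∈ E). Let V = L^n and let h be a nondegenerate hermitian ρ-sesquilinear form on V (h is L-linear in the first variable, ρ-semilinear in the second, and h(y,x) = ρ(h(x,y))) that admits a totally isotropic L-subspace of dimension ⌊n/2⌋. Then there exists an injective L-algebra homomorphism ι : E → End_L(V) such that h(ι(a)x, y) = h(x, ι(σ(a))y) for all a ∈ E and x, y ∈ V. -/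
/-!
The semilinear involution `σ` makes `E` the base change to `L` of the étale `K`-algebra `F` of its
fixed points. Every étale algebra `F` carries a functional `s` for which the symmetric form
`s (x * y)` is nondegenerate of maximal Witt index: on a simple field extension `K(α)` of degree
`d`, take the coefficient of `α ^ (d - 1)`, for which the powers `α ^ i` with `i < d / 2` span a
totally isotropic subspace; orthogonal sums, with the summands rescaled, extend this to products.

If `S` extends `s` to `E`, the hermitian form `S (σ x * y)` is again nondegenerate of maximal Witt
index, and multiplication by `a` and by `σ a` are adjoint for it. Two such hermitian forms of the
same dimension are similar, so `V` is `E` up to a scalar factor in the form, and adjoints do not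
see that factor.
-/

open Module
open scoped TensorProduct

section SesquilinearForms

variable {L V V' : Type*} [Field L] [AddCommGroup V] [Module L V] [AddCommGroup V'] [Module L V']
  {ρ : L →+* L} {B : V →ₛₗ[ρ] V →ₗ[L] L} {B' : V' →ₛₗ[ρ] V' →ₗ[L] L}

/-- A subspace on which the sesquilinear form `B` vanishes identically. -/
def IsTotallyIsotropic (B : V →ₛₗ[ρ] V →ₗ[L] L) (W : Submodule L V) : Prop :=
  ∀ w ∈ W, ∀ w' ∈ W, B w w' = 0

/-- A form has maximal Witt index if it has a totally isotropic subspace of dimension `⌊n / 2⌋`,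
where `n` is the dimension of the whole space. -/
def HasMaximalWittIndex (B : V →ₛₗ[ρ] V →ₗ[L] L) : Prop :=
  ∃ W : Submodule L V, finrank L W = finrank L V / 2 ∧ IsTotallyIsotropic B W

theorem isTotallyIsotropic_span {S : Set V} (hS : ∀ x ∈ S, ∀ y ∈ S, B x y = 0) :
    IsTotallyIsotropic B (Submodule.span L S) := by
  have hle : ∀ x ∈ S, Submodule.span L S ≤ LinearMap.ker (B x) := fun x hx =>
    Submodule.span_le.2 (hS x hx)
  intro w hw w' hw'
  have hle' : Submodule.span L S ≤ LinearMap.ker (B.flip w') :=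
    Submodule.span_le.2 fun x hx => hle x hx hw'
  exact hle' hw

theorem IsTotallyIsotropic.sup_span_singleton (hB : B.IsSymm) {W : Submodule L V} {v : V}
    (hW : IsTotallyIsotropic B W) (hWv : ∀ w ∈ W, B w v = 0) (hv : B v v = 0) :
    IsTotallyIsotropic B (W ⊔ Submodule.span L {v}) := by
  have hvW : ∀ w ∈ W, B v w = 0 := fun w hw => hB.isRefl.eq_zero (hWv w hw)
  intro x hx y hy
  obtain ⟨w, hw, _, hav, rfl⟩ := Submodule.mem_sup.1 hx
  obtain ⟨w', hw', _, hav', rfl⟩ := Submodule.mem_sup.1 hy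
  obtain ⟨a, rfl⟩ := Submodule.mem_span_singleton.1 hav
  obtain ⟨a', rfl⟩ := Submodule.mem_span_singleton.1 hav'
  simp [hW w hw w' hw', hWv w hw, hvW w' hw', hv]

theorem finrank_sup_span_singleton [FiniteDimensional L V] {W : Submodule L V} {v : V}
    (hv : v ∉ W) : finrank L ↥(W ⊔ Submodule.span L {v}) = finrank L W + 1 := by
  have hv0 : v ≠ 0 := fun h => hv (h ▸ W.zero_mem)
  have hdisj : W ⊓ Submodule.span L {v} = ⊥ :=
    (Submodule.disjoint_span_singleton_of_notMem hv).eq_bot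
  have hsum := Submodule.finrank_sup_add_finrank_inf_eq W (Submodule.span L {v})
  rwa [hdisj, finrank_bot, finrank_span_singleton hv0, add_zero] at hsum

theorem surjective_pi_of_linearIndependent (hρ : Function.Surjective ρ) (hB : B.SeparatingLeft)
    {α : Type*} [Finite α] {u : α → V} (hu : LinearIndependent L u) :
    Function.Surjective (LinearMap.pi fun i => B (u i)) := by
  have hBu : LinearIndependent L fun i => (B (u i) : V → L) :=
    hu.map_of_surjective_injective ρ
      ((LinearMap.ltoFun L V L L).toAddMonoidHom.comp B.toAddMonoidHom) hρ
      (fun x hx => hB x (congrFun hx)) (fun a x => by ext; simp)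
  rw [← LinearMap.range_eq_top, ← span_flip_eq_top_iff_linearIndependent.2 hBu]
  exact (Submodule.span_eq _).symm

theorem exists_dual_family (hρ : Function.Surjective ρ) (hB : B.SeparatingLeft)
    {α : Type*} [Finite α] [DecidableEq α] {u : α → V} (hu : LinearIndependent L u) (c : L) :
    ∃ f : α → V, ∀ i j, B (u i) (f j) = if i = j then c else 0 := by
  choose f hf using fun j =>
    surjective_pi_of_linearIndependent hρ hB hu fun i => if i = j then c else 0
  exact ⟨f, fun i j => congrFun (hf j) i⟩

theorem finrank_add_finrank_orthogonalBilin [FiniteDimensional L V] (hρ : Function.Surjective ρ)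
    (hB : B.SeparatingLeft) (W : Submodule L V) :
    finrank L W + finrank L (W.orthogonalBilin B) = finrank L V := by
  let b := finBasis L W
  let T := LinearMap.pi fun i => B (b i)
  have hT : Function.Surjective T := surjective_pi_of_linearIndependent hρ hB
    (b.linearIndependent.map' W.subtype W.ker_subtype)
  have hker : T.ker = W.orthogonalBilin B := by
    ext y
    suffices (∀ i, B (b i) y = 0) ↔ ∀ w ∈ W, B w y = 0 by
      simpa [T, funext_iff] using this
    refine ⟨fun h w hw => ?_, fun h i => h _ (b i).2⟩
    have hzero : (B.flip y).comp W.subtype = 0 := b.ext h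
    exact LinearMap.congr_fun hzero ⟨w, hw⟩
  rw [← hker, ← T.finrank_range_add_finrank_ker, LinearMap.range_eq_top.2 hT, finrank_top]
  simp

theorem IsTotallyIsotropic.two_mul_finrank_le [FiniteDimensional L V]
    (hρ : Function.Surjective ρ) (hB : B.SeparatingLeft) {W : Submodule L V}
    (hW : IsTotallyIsotropic B W) : 2 * finrank L W ≤ finrank L V := by
  have hle : W ≤ W.orthogonalBilin B := fun w' hw' w hw => hW w hw w' hw'
  have := Submodule.finrank_mono hle
  have := finrank_add_finrank_orthogonalBilin hρ hB W
  omega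

theorem IsTotallyIsotropic.exists_orthogonal_anisotropic [FiniteDimensional L V]
    (hρ : Function.Surjective ρ) (hsymm : B.IsSymm) (hB : B.SeparatingLeft) {W : Submodule L V}
    (hW : IsTotallyIsotropic B W) (hdim : finrank L V = 2 * finrank L W + 1) :
    ∃ v, (∀ w ∈ W, B w v = 0) ∧ B v v ≠ 0 := by
  have hnot : ¬ W.orthogonalBilin B ≤ W := fun hle => by
    have := Submodule.finrank_mono hle
    have := finrank_add_finrank_orthogonalBilin hρ hB W
    omega
  obtain ⟨v, hWv, hvW⟩ := SetLike.not_le_iff_exists.1 hnot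
  refine ⟨v, hWv, fun hv => ?_⟩
  have := (hW.sup_span_singleton hsymm hWv hv).two_mul_finrank_le hρ hB
  rw [finrank_sup_span_singleton hvW] at this
  omega

theorem linearIndependent_of_gram_perm {α : Type*} [DecidableEq α] (τ : Equiv.Perm α) {c : L}
    (hc : c ≠ 0) {u : α → V} (hu : ∀ i j, B (u i) (u j) = if j = τ i then c else 0) :
    LinearIndependent L u := by
  rw [linearIndependent_iff']
  intro s g hg j hj
  have := congrArg (B (u (τ.symm j))) hg
  simpa [hu, hj, hc] using this

/-- The interchange of the two halves of a hyperbolic basis, fixing the remaining vectors. -/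
abbrev hyperbolicPerm (ι κ : Type*) : Equiv.Perm ((ι ⊕ ι) ⊕ κ) :=
  (Equiv.sumComm ι ι).sumCongr (Equiv.refl κ)

-- `t` takes the place of `1 / 2` in the usual correction `f - (2 * c)⁻¹ * B f f • e`.
theorem exists_isotropic_dual_family (hsymm : B.IsSymm) {t : L} (ht : t + ρ t = 1)
    {ι : Type*} [Finite ι] [DecidableEq ι] {e f : ι → V} {c : L} (hc : c ≠ 0)
    (hρc : ρ c = c) (hee : ∀ i j, B (e i) (e j) = 0)
    (hef : ∀ i j, B (e i) (f j) = if i = j then c else 0) :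
    ∃ f' : ι → V, (∀ i j, B (e i) (f' j) = if i = j then c else 0) ∧
      (∀ i j, B (f' i) (f' j) = 0) ∧ ∀ x, (∀ i, B x (e i) = 0) → ∀ j, B x (f' j) = B x (f j) := by
  have := Fintype.ofFinite ι
  have hfe : ∀ i j, B (f i) (e j) = if j = i then c else 0 := fun i j => by
    rw [← hsymm.eq, hef, apply_ite ρ, hρc, map_zero]
  refine ⟨fun j => f j - ∑ k, (c⁻¹ * t * B (f k) (f j)) • e k, fun i j => ?_, fun i j => ?_,
    fun x hx j => ?_⟩
  · simp [hef, hee]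
  · have hG : ρ (B (f j) (f i)) = B (f i) (f j) := hsymm.eq _ _
    simp only [map_sub, map_sum, map_smulₛₗ, LinearMap.sub_apply, LinearMap.sum_apply,
      LinearMap.smul_apply, map_mul, map_inv₀, RingHom.id_apply, smul_eq_mul, hef, hfe, hee, hρc,
      hG, mul_ite, mul_zero, Finset.sum_ite_eq', Finset.mem_univ, if_true,
      Finset.sum_const_zero, sub_zero]
    field_simp
    linear_combination (-B (f i) (f j)) * ht
  · simp [hx]

theorem IsTotallyIsotropic.exists_orthogonal_anisotropic_family [FiniteDimensional L V]
    (hρ : Function.Surjective ρ) (hsymm : B.IsSymm) (hB : B.SeparatingLeft) {W : Submodule L V}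
    (hW : IsTotallyIsotropic B W) (hdim : finrank L W = finrank L V / 2) :
    ∃ c : L, c ≠ 0 ∧ ρ c = c ∧ ∃ v : Fin (finrank L V % 2) → V,
      (∀ w ∈ W, ∀ i, B w (v i) = 0) ∧ ∀ i j, B (v i) (v j) = if i = j then c else 0 := by
  rcases Nat.mod_two_eq_zero_or_one (finrank L V) with hmod | hmod <;> rw [hmod]
  · exact ⟨1, one_ne_zero, map_one ρ, finZeroElim, fun _ _ i => i.elim0, fun i => i.elim0⟩
  · obtain ⟨v, hWv, hv⟩ := hW.exists_orthogonal_anisotropic hρ hsymm hB (by omega)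
    exact ⟨B v v, hv, hsymm.eq v v, fun _ => v, fun w hw _ => hWv w hw,
      fun i j => by rw [if_pos (Subsingleton.elim i j)]⟩

theorem linearIndependent_sumElim_of_orthogonal {ι κ : Type*} [Finite κ] [DecidableEq κ]
    {e : ι → V} {v : κ → V} {c : L} (hc : c ≠ 0) (he : LinearIndependent L e)
    (hve : ∀ k i, B (v k) (e i) = 0) (hvv : ∀ k l, B (v k) (v l) = if k = l then c else 0) :
    LinearIndependent L (Sum.elim e v) := by
  have := Fintype.ofFinite κ
  have hv : LinearIndependent L v :=
    linearIndependent_of_gram_perm (B := B) (Equiv.refl κ) hc fun k l => by simp [hvv, eq_comm]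
  refine he.sum_type hv (Submodule.disjoint_def.2 fun x hxe hxv => ?_)
  obtain ⟨a, rfl⟩ := (Submodule.mem_span_range_iff_exists_fun L).1 hxv
  refine Finset.sum_eq_zero fun k _ => ?_
  have hle : Submodule.span L (Set.range e) ≤ LinearMap.ker (B (v k)) :=
    Submodule.span_le.2 (Set.range_subset_iff.2 (hve k))
  have hak : a k * c = 0 := by simpa [hvv] using hle hxe
  rw [(mul_eq_zero.1 hak).resolve_right hc, zero_smul]

theorem HasMaximalWittIndex.exists_hyperbolic_basis [FiniteDimensional L V]
    (hρ : Function.Surjective ρ) {t : L} (ht : t + ρ t = 1) (hsymm : B.IsSymm)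
    (hB : B.SeparatingLeft) (hW : HasMaximalWittIndex B) {n : ℕ} (hn : finrank L V = n) :
    ∃ c : L, c ≠ 0 ∧ ∃ b : Basis ((Fin (n / 2) ⊕ Fin (n / 2)) ⊕ Fin (n % 2)) L V,
      ∀ i j, B (b i) (b j) = if j = hyperbolicPerm _ _ i then c else 0 := by
  subst hn
  obtain ⟨W, hdim, hW⟩ := hW
  obtain ⟨c, hc, hρc, v, hWv, hvv⟩ :=
    hW.exists_orthogonal_anisotropic_family hρ hsymm hB hdim
  let e := finBasisOfFinrankEq L W hdim
  have hee : ∀ i j, B (e i : V) (e j) = 0 := fun i j => hW _ (e i).2 _ (e j).2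
  have hev : ∀ i k, B (e i : V) (v k) = 0 := fun i k => hWv _ (e i).2 k
  have hve : ∀ k i, B (v k) (e i : V) = 0 := fun k i => hsymm.isRefl.eq_zero (hev i k)
  have he : LinearIndependent L fun i => (e i : V) :=
    e.linearIndependent.map' W.subtype W.ker_subtype
  obtain ⟨g, hg⟩ := exists_dual_family hρ hB
    (linearIndependent_sumElim_of_orthogonal hc he hve hvv) c
  obtain ⟨f, hef, hff, hxf⟩ := exists_isotropic_dual_family hsymm ht hc hρc hee
    (f := fun j => g (Sum.inl j)) fun i j => by simpa using hg (Sum.inl i) (Sum.inl j)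
  have hvf : ∀ k j, B (v k) (f j) = 0 := fun k j => by
    rw [hxf _ (hve k)]; simpa using hg (Sum.inr k) (Sum.inl j)
  have hfv : ∀ j k, B (f j) (v k) = 0 := fun j k => hsymm.isRefl.eq_zero (hvf k j)
  have hfe : ∀ i j, B (f i) (e j : V) = if j = i then c else 0 := fun i j => by
    rw [← hsymm.eq, hef, apply_ite ρ, hρc, map_zero]
  have hgram : ∀ i j, B (Sum.elim (Sum.elim (fun i => (e i : V)) f) v i)
      (Sum.elim (Sum.elim (fun i => (e i : V)) f) v j) =
        if j = hyperbolicPerm _ _ i then c else 0 := by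
    rintro ((i | i) | i) ((j | j) | j) <;>
      simp [hee, hef, hev, hfe, hff, hfv, hve, hvf, hvv, eq_comm]
  have hcard : Fintype.card ((Fin (finrank L V / 2) ⊕ Fin (finrank L V / 2)) ⊕
      Fin (finrank L V % 2)) = finrank L V := by
    simp only [Fintype.card_sum, Fintype.card_fin]
    omega
  exact ⟨c, hc, basisOfLinearIndependentOfCardEqFinrank' _
    (linearIndependent_of_gram_perm _ hc hgram) hcard, by simpa using hgram⟩

theorem HasMaximalWittIndex.exists_similitude [FiniteDimensional L V] [FiniteDimensional L V']
    (hρ : Function.Surjective ρ) {t : L} (ht : t + ρ t = 1) (hdim : finrank L V = finrank L V')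
    (hsymm : B.IsSymm) (hB : B.SeparatingLeft) (hW : HasMaximalWittIndex B)
    (hsymm' : B'.IsSymm) (hB' : B'.SeparatingLeft) (hW' : HasMaximalWittIndex B') :
    ∃ c : L, c ≠ 0 ∧ ∃ φ : V ≃ₗ[L] V', ∀ x y, B' (φ x) (φ y) = c * B x y := by
  obtain ⟨c, hc, b, hb⟩ := hW.exists_hyperbolic_basis hρ ht hsymm hB rfl
  obtain ⟨c', hc', b', hb'⟩ := hW'.exists_hyperbolic_basis hρ ht hsymm' hB' hdim.symm
  let φ := b.equiv b' (Equiv.refl _)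
  have hφ : (B'.comp φ.toLinearMap).compl₂ φ.toLinearMap = (c' / c) • B :=
    b.ext fun i => b.ext fun j => by simp [φ, hb, hb', hc]
  exact ⟨c' / c, div_ne_zero hc' hc, φ, fun x y => LinearMap.congr_fun₂ hφ x y⟩

/-- The orthogonal direct sum of two sesquilinear forms. -/
def orthogonalSum (B : V →ₛₗ[ρ] V →ₗ[L] L) (B' : V' →ₛₗ[ρ] V' →ₗ[L] L) :
    V × V' →ₛₗ[ρ] V × V' →ₗ[L] L :=
  (B.comp (LinearMap.fst L V V')).compl₂ (LinearMap.fst L V V') +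
    (B'.comp (LinearMap.snd L V V')).compl₂ (LinearMap.snd L V V')

@[simp]
theorem orthogonalSum_apply (x y : V × V') :
    orthogonalSum B B' x y = B x.1 y.1 + B' x.2 y.2 := rfl

theorem separatingLeft_orthogonalSum (hB : B.SeparatingLeft) (hB' : B'.SeparatingLeft) :
    (orthogonalSum B B').SeparatingLeft := fun x hx =>
  Prod.ext (hB x.1 fun y => by simpa using hx (y, 0)) (hB' x.2 fun y => by simpa using hx (0, y))

theorem IsTotallyIsotropic.prod {W : Submodule L V} {W' : Submodule L V'}
    (hW : IsTotallyIsotropic B W) (hW' : IsTotallyIsotropic B' W') :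
    IsTotallyIsotropic (orthogonalSum B B') (W.prod W') := fun x hx y hy => by
  simp [hW x.1 hx.1 y.1 hy.1, hW' x.2 hx.2 y.2 hy.2]

theorem finrank_submodule_prod [FiniteDimensional L V] [FiniteDimensional L V']
    (W : Submodule L V) (W' : Submodule L V') :
    finrank L (W.prod W') = finrank L W + finrank L W' := by
  have hrange : LinearMap.range (W.subtype.prodMap W'.subtype) = W.prod W' := by
    rw [LinearMap.range_prodMap, Submodule.range_subtype, Submodule.range_subtype]
  rw [← hrange, LinearMap.finrank_range_of_inj, finrank_prod]
  exact Function.Injective.prodMap W.injective_subtype W'.injective_subtype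

theorem HasMaximalWittIndex.exists_smul_orthogonalSum [FiniteDimensional L V]
    [FiniteDimensional L V'] (hρ : Function.Surjective ρ) (hsymm : B.IsSymm)
    (hB : B.SeparatingLeft) (hW : HasMaximalWittIndex B) (hsymm' : B'.IsSymm)
    (hB' : B'.SeparatingLeft) (hW' : HasMaximalWittIndex B') :
    ∃ c : L, c ≠ 0 ∧ ∃ c' : L, c' ≠ 0 ∧
      HasMaximalWittIndex (orthogonalSum (c • B) (c' • B')) := by
  obtain ⟨W, hdim, hW⟩ := hW
  obtain ⟨W', hdim', hW'⟩ := hW'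
  by_cases hodd : finrank L V % 2 = 1 ∧ finrank L V' % 2 = 1
  · obtain ⟨v, hWv, hv⟩ := hW.exists_orthogonal_anisotropic hρ hsymm hB (by omega)
    obtain ⟨v', hWv', hv'⟩ := hW'.exists_orthogonal_anisotropic hρ hsymm' hB' (by omega)
    have hnot : (v, v') ∉ W.prod W' := fun h => hv (hW v h.1 v h.1)
    have hsum : (orthogonalSum (B' v' v' • B) (-B v v • B')).IsSymm :=
      ⟨fun x y => by simp [hsymm.eq, hsymm'.eq]⟩
    refine ⟨B' v' v', hv', -B v v, neg_ne_zero.2 hv, W.prod W' ⊔ Submodule.span L {(v, v')},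
      ?_, ?_⟩
    · rw [finrank_sup_span_singleton hnot, finrank_submodule_prod, finrank_prod]
      omega
    · have hWW' : IsTotallyIsotropic (orthogonalSum (B' v' v' • B) (-B v v • B')) (W.prod W') :=
        IsTotallyIsotropic.prod (fun w hw w' hw' => by simp [hW w hw w' hw'])
          fun w hw w' hw' => by simp [hW' w hw w' hw']
      exact hWW'.sup_span_singleton hsum
        (fun w hw => by simp [hWv w.1 hw.1, hWv' w.2 hw.2]) (by simp [mul_comm])
  · refine ⟨1, one_ne_zero, 1, one_ne_zero, W.prod W', ?_, by simpa using hW.prod hW'⟩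
    rw [finrank_submodule_prod, finrank_prod]
    omega

end SesquilinearForms

section SplitFrobenius

variable {K F G : Type*} [Field K] [CommRing F] [Algebra K F] [CommRing G] [Algebra K G]

/-- The symmetric bilinear form `(x, y) ↦ s (x * y)` attached to a functional `s` on an algebra. -/
def mulForm (s : F →ₗ[K] K) : F →ₗ[K] F →ₗ[K] K :=
  (LinearMap.mul K F).compr₂ s

@[simp]
theorem mulForm_apply (s : F →ₗ[K] K) (x y : F) : mulForm s x y = s (x * y) := rfl

theorem isSymm_mulForm (s : F →ₗ[K] K) : (mulForm s).IsSymm :=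
  ⟨fun x y => by simp [mul_comm]⟩

theorem mulForm_coprod (s : F →ₗ[K] K) (s' : G →ₗ[K] K) :
    mulForm (s.coprod s') = orthogonalSum (mulForm s) (mulForm s') := rfl

theorem mulForm_smul (c : K) (s : F →ₗ[K] K) : mulForm (c • s) = c • mulForm s := rfl

variable (K F) in
/-- An algebra is split Frobenius if it carries a functional `s` whose form `s (x * y)` is
nondegenerate and of maximal Witt index. -/
def IsSplitFrobenius : Prop :=
  ∃ s : F →ₗ[K] K, (mulForm s).SeparatingLeft ∧ HasMaximalWittIndex (mulForm s)

theorem IsSplitFrobenius.of_subsingleton [Subsingleton F] : IsSplitFrobenius K F :=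
  ⟨0, fun _ _ => Subsingleton.elim _ _, ⊥, by simp [finrank_zero_of_subsingleton],
    by simp [IsTotallyIsotropic]⟩

theorem IsSplitFrobenius.of_algEquiv (e : F ≃ₐ[K] G) (hG : IsSplitFrobenius K G) :
    IsSplitFrobenius K F := by
  obtain ⟨s, hs, W, hdim, hW⟩ := hG
  refine ⟨s ∘ₗ e.toLinearMap, fun x hx => ?_, W.comap e.toLinearMap, ?_, fun x hx y hy => ?_⟩
  · have hex : e x = 0 := hs _ fun y => by simpa using hx (e.symm y)
    simpa using hex
  · rw [e.toLinearEquiv.finrank_eq, ← hdim]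
    exact (e.toLinearEquiv.ofSubmodule' W).finrank_eq
  · simpa using hW _ hx _ hy

theorem IsSplitFrobenius.prod [FiniteDimensional K F] [FiniteDimensional K G]
    (hF : IsSplitFrobenius K F) (hG : IsSplitFrobenius K G) : IsSplitFrobenius K (F × G) := by
  obtain ⟨s, hs, hW⟩ := hF
  obtain ⟨s', hs', hW'⟩ := hG
  obtain ⟨c, hc, c', hc', hsum⟩ := hW.exists_smul_orthogonalSum Function.surjective_id
    (isSymm_mulForm s) hs (isSymm_mulForm s') hs' hW'
  refine ⟨(c • s).coprod (c' • s'), ?_, by rwa [mulForm_coprod, mulForm_smul, mulForm_smul]⟩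
  rw [mulForm_coprod, mulForm_smul, mulForm_smul]
  exact separatingLeft_orthogonalSum (fun x hx => hs x fun y => by simpa [hc] using hx y)
    fun x hx => hs' x fun y => by simpa [hc'] using hx y

theorem IsSplitFrobenius.of_powerBasis {F : Type*} [Field F] [Algebra K F]
    (pb : PowerBasis K F) : IsSplitFrobenius K F := by
  have hpos : 0 < pb.dim := pb.dim_pos
  let s : F →ₗ[K] K := pb.basis.coord ⟨pb.dim - 1, by omega⟩
  have hs : ∀ k < pb.dim, s (pb.gen ^ k) = if k = pb.dim - 1 then 1 else 0 := fun k hk => by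
    rw [← Fin.val_mk hk, ← pb.basis_eq_pow, Basis.coord_apply, Basis.repr_self,
      Finsupp.single_apply]
    simp only [Fin.mk.injEq]
  have hli : LinearIndependent K fun i : Fin (pb.dim / 2) => pb.gen ^ (i : ℕ) := by
    simpa [Function.comp_def] using pb.basis.linearIndependent.comp
      (Fin.castLE (Nat.div_le_self _ 2)) (Fin.castLE_injective _)
  refine ⟨s, fun x hx => ?_, Submodule.span K (Set.range fun i : Fin (pb.dim / 2) =>
    pb.gen ^ (i : ℕ)), ?_, isTotallyIsotropic_span ?_⟩
  · by_contra hx0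
    have := hx (x⁻¹ * pb.gen ^ (pb.dim - 1))
    rw [mulForm_apply, mul_inv_cancel_left₀ hx0, hs _ (by omega), if_pos rfl] at this
    exact one_ne_zero this
  · rw [finrank_span_eq_card hli, pb.finrank, Fintype.card_fin]
  · rintro _ ⟨i, rfl⟩ _ ⟨j, rfl⟩
    rw [mulForm_apply, ← pow_add, hs _ (by omega), if_neg (by omega)]

theorem IsSplitFrobenius.pi {ι : Type*} [Finite ι] (A : ι → Type*) [∀ i, Field (A i)]
    [∀ i, Algebra K (A i)] [∀ i, FiniteDimensional K (A i)] [∀ i, Algebra.IsSeparable K (A i)] :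
    IsSplitFrobenius K (∀ i, A i) := by
  induction ι using Finite.induction_empty_option with
  | of_equiv e ih =>
    exact (ih fun i => A (e i)).of_algEquiv (AlgEquiv.piCongrLeft K A e).symm
  | h_empty => exact .of_subsingleton
  | h_option ih =>
    exact ((of_powerBasis (Field.powerBasisOfFiniteOfSeparable K _)).prod (ih _)).of_algEquiv
      (AlgEquiv.ofRingEquiv (f := RingEquiv.piOptionEquivProd) fun _ => rfl)

variable (K F) in
theorem IsSplitFrobenius.of_etale [Algebra.Etale K F] : IsSplitFrobenius K F := by
  obtain ⟨I, _, A, _, _, e, hA⟩ := (Algebra.Etale.iff_exists_algEquiv_prod K F).1 inferInstance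
  have := fun i => (hA i).1
  have := fun i => (hA i).2
  exact (IsSplitFrobenius.pi A).of_algEquiv e

end SplitFrobenius

section BaseChange

variable {K L N M : Type*} [Field K] [Field L] [Algebra K L] [AddCommGroup N] [Module K N]
  [AddCommGroup M] [Module K M] [Module L M] [IsScalarTower K L M] {f : N →ₗ[K] M}
  {ρ : L →+* L} {b : N →ₗ[K] N →ₗ[K] K} {B : M →ₛₗ[ρ] M →ₗ[L] L}

theorem finrank_eq_of_isBaseChange (hf : IsBaseChange L f) : finrank L M = finrank K N := by
  rw [← hf.equiv.finrank_eq, finrank_baseChange]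

theorem finrank_span_image_of_isBaseChange (hf : IsBaseChange L f) (W : Submodule K N) :
    finrank L (Submodule.span L (f '' W)) = finrank K W := by
  have hspan : Submodule.span L (f '' W) = (W.baseChange L).map hf.equiv.toLinearMap := by
    rw [Submodule.baseChange_eq_span, Submodule.map_span, Submodule.map_coe, Set.image_image]
    simp [IsBaseChange.equiv_tmul]
  have hinj : Function.Injective (W.subtype.baseChange L) :=
    Module.Flat.lTensor_preserves_injective_linearMap _ W.injective_subtype
  rw [hspan, hf.equiv.finrank_map_eq, Submodule.baseChange, LinearMap.finrank_range_of_inj hinj,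
    finrank_baseChange]

theorem HasMaximalWittIndex.of_isBaseChange (hf : IsBaseChange L f)
    (hfB : ∀ x y, B (f x) (f y) = algebraMap K L (b x y)) (hb : HasMaximalWittIndex b) :
    HasMaximalWittIndex B := by
  obtain ⟨W, hdim, hW⟩ := hb
  refine ⟨Submodule.span L (f '' W), ?_, isTotallyIsotropic_span ?_⟩
  · rw [finrank_span_image_of_isBaseChange hf, finrank_eq_of_isBaseChange hf, hdim]
  · rintro _ ⟨x, hx, rfl⟩ _ ⟨y, hy, rfl⟩
    rw [hfB, hW x hx y hy, map_zero]

theorem separatingLeft_of_isBaseChange [FiniteDimensional K N] (hf : IsBaseChange L f)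
    (hfB : ∀ x y, B (f x) (f y) = algebraMap K L (b x y)) (hb : b.SeparatingLeft) :
    B.SeparatingLeft := by
  let e := finBasis K N
  obtain ⟨e', he'⟩ := exists_dual_family Function.surjective_id hb e.linearIndependent 1
  intro x hx
  have hcoord : ∀ j, B x (f (e' j)) = ρ ((hf.basis e).repr x j) := fun j => by
    conv_lhs => rw [← (hf.basis e).sum_repr x]
    simp [IsBaseChange.basis_apply, hfB, he', apply_ite (algebraMap K L)]
  refine (hf.basis e).ext_elem fun j => ?_
  rw [map_zero, Finsupp.zero_apply, ← map_eq_zero ρ, ← hcoord, hx]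

end BaseChange

section QuadraticDescent

section SemilinearInvolution

variable {L M : Type*} [Field L] [AddCommGroup M] [Module L M] {ρ : L →+* L} {l : L}

theorem eq_zero_and_eq_zero_of_add_smul_eq_zero (hl : ρ l ≠ l) (σ : M →ₛₗ[ρ] M) {a b : M}
    (ha : σ a = a) (hb : σ b = b) (hab : a + l • b = 0) : a = 0 ∧ b = 0 := by
  have hσab : a + ρ l • b = 0 := by simpa [ha, hb] using congrArg σ hab
  have hb0 : (ρ l - l) • b = 0 := by
    rw [sub_smul, sub_eq_zero]
    exact add_left_cancel (hσab.trans hab.symm)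
  have hb0 : b = 0 := (smul_eq_zero.1 hb0).resolve_left (sub_ne_zero.2 hl)
  exact ⟨by simpa [hb0] using hab, hb0⟩

theorem exists_fixed_add_smul (hρ : Function.Involutive ρ) (hl : ρ l ≠ l) (σ : M →ₛₗ[ρ] M)
    (hσ : Function.Involutive σ) (x : M) : ∃ a b, σ a = a ∧ σ b = b ∧ x = a + l • b := by
  have hδ : ρ l - l ≠ 0 := sub_ne_zero.2 hl
  have hρδ : ρ (ρ l - l)⁻¹ = -(ρ l - l)⁻¹ := by
    rw [map_inv₀, map_sub, hρ, ← inv_neg, neg_sub]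
  refine ⟨(ρ l - l)⁻¹ • (ρ l • x - l • σ x), (ρ l - l)⁻¹ • (σ x - x), ?_, ?_, ?_⟩
  · rw [map_smulₛₗ, hρδ, map_sub, map_smulₛₗ, map_smulₛₗ, hρ, hσ, neg_smul, ← smul_neg, neg_sub]
  · rw [map_smulₛₗ, hρδ, map_sub, hσ, neg_smul, ← smul_neg, neg_sub]
  · rw [smul_comm l, ← smul_add, eq_inv_smul_iff₀ hδ]
    module

end SemilinearInvolution

variable {K L : Type*} [Field K] [Field L] [Algebra K L]

theorem algEquiv_involutive [Algebra.IsQuadraticExtension K L] (ρ : L ≃ₐ[K] L) :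
    Function.Involutive ρ := by
  have hcard : Fintype.card (L ≃ₐ[K] L) ≤ 2 :=
    Algebra.IsQuadraticExtension.finrank_eq_two K L ▸ AlgEquiv.card_le
  have horder : orderOf ρ ∣ 2 := by
    have hle : orderOf ρ ≤ 2 := (orderOf_le_card_univ (x := ρ)).trans hcard
    have hpos : 0 < orderOf ρ := orderOf_pos ρ
    interval_cases orderOf ρ <;> norm_num
  intro x
  rw [← AlgEquiv.mul_apply, ← sq, orderOf_dvd_iff_pow_eq_one.1 horder, AlgEquiv.one_apply]

theorem exists_eq_algebraMap_add_smul [Algebra.IsQuadraticExtension K L] {ρ : L ≃ₐ[K] L} {l : L}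
    (hl : ρ l ≠ l) (x : L) : ∃ p q : K, x = algebraMap K L p + q • l := by
  have hli : LinearIndependent K ![1, l] :=
    (LinearIndependent.pair_iff' one_ne_zero).2 fun p hp =>
      hl (by rw [← hp, map_smul, map_one])
  have hspan := hli.span_eq_top_of_card_eq_finrank'
    (by rw [Fintype.card_fin, Algebra.IsQuadraticExtension.finrank_eq_two])
  have hx : x ∈ Submodule.span K (Set.range ![1, l]) := hspan ▸ Submodule.mem_top
  rw [Matrix.range_cons_cons_empty, Submodule.mem_span_pair] at hx
  obtain ⟨p, q, rfl⟩ := hx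
  exact ⟨p, q, by rw [Algebra.algebraMap_eq_smul_one]⟩

theorem exists_add_apply_eq_one {ρ : L →+* L} (hρ : Function.Involutive ρ) {l : L}
    (hl : ρ l ≠ l) : ∃ t, t + ρ t = 1 := by
  refine ⟨l / (l - ρ l), ?_⟩
  have hδ : l - ρ l ≠ 0 := sub_ne_zero.2 hl.symm
  rw [map_div₀, map_sub, hρ, ← neg_sub l, div_neg, ← sub_eq_add_neg, ← sub_div, div_self hδ]

theorem exists_tmul_add_tmul [Algebra.IsQuadraticExtension K L] {ρ : L ≃ₐ[K] L} {l : L}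
    (hl : ρ l ≠ l) {N : Type*} [AddCommGroup N] [Module K N] (z : L ⊗[K] N) :
    ∃ a b : N, z = 1 ⊗ₜ a + l ⊗ₜ b := by
  induction z with
  | zero => exact ⟨0, 0, by simp⟩
  | tmul x n =>
    obtain ⟨p, q, rfl⟩ := exists_eq_algebraMap_add_smul hl x
    refine ⟨p • n, q • n, ?_⟩
    rw [TensorProduct.add_tmul, Algebra.algebraMap_eq_smul_one, TensorProduct.smul_tmul,
      TensorProduct.smul_tmul]
  | add z w hz hw =>
    obtain ⟨a, b, rfl⟩ := hz
    obtain ⟨a', b', rfl⟩ := hw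
    refine ⟨a + a', b + b', ?_⟩
    rw [TensorProduct.tmul_add, TensorProduct.tmul_add, add_add_add_comm]

theorem isBaseChange_of_range_eq_fixed [Algebra.IsQuadraticExtension K L] {ρ : L ≃ₐ[K] L}
    (hρ : ρ ≠ 1) {N M : Type*} [AddCommGroup N] [Module K N] [AddCommGroup M] [Module K M]
    [Module L M] [IsScalarTower K L M] {f : N →ₗ[K] M} (hf : Function.Injective f)
    {σ : M →ₛₗ[(ρ : L →+* L)] M} (hσ : Function.Involutive σ)
    (hfσ : ∀ x, x ∈ LinearMap.range f ↔ σ x = x) : IsBaseChange L f := by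
  obtain ⟨l, hl⟩ : ∃ l, ρ l ≠ l := DFunLike.ne_iff.1 hρ
  let Φ : L ⊗[K] N →ₗ[L] M := f.liftBaseChange L
  have hΦ : ∀ a b, Φ (1 ⊗ₜ a + l ⊗ₜ b) = f a + l • f b := fun a b => by simp [Φ]
  have hfix : ∀ a, σ (f a) = f a := fun a => (hfσ _).1 ⟨a, rfl⟩
  have hinj : Function.Injective Φ := by
    refine (injective_iff_map_eq_zero Φ).2 fun z hz => ?_
    obtain ⟨a, b, rfl⟩ := exists_tmul_add_tmul hl z
    obtain ⟨ha, hb⟩ := eq_zero_and_eq_zero_of_add_smul_eq_zero (ρ := (ρ : L →+* L)) hl σ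
      (hfix a) (hfix b) ((hΦ a b).symm.trans hz)
    rw [(map_eq_zero_iff f hf).1 ha, (map_eq_zero_iff f hf).1 hb]
    simp
  have hsurj : Function.Surjective Φ := fun x => by
    obtain ⟨_, _, ha, hb, rfl⟩ := exists_fixed_add_smul (ρ := (ρ : L →+* L))
      (algEquiv_involutive ρ) hl σ hσ x
    obtain ⟨a, rfl⟩ := (hfσ _).2 ha
    obtain ⟨b, rfl⟩ := (hfσ _).2 hb
    exact ⟨_, hΦ a b⟩
  exact .of_equiv (.ofBijective Φ ⟨hinj, hsurj⟩) fun x =>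
    (LinearEquiv.ofBijective_apply ..).trans (by simp [Φ])

end QuadraticDescent

section InvolutionForm

variable {L E : Type*} [Field L] [CommRing E] [Algebra L E] {ρ : L →+* L} (σ : E →+* E)
  (hσ : ∀ (c : L) (x : E), σ (c • x) = ρ c • σ x) (S : E →ₗ[L] L)

/-- A semilinear ring endomorphism, as a semilinear map. -/
def semilinearOfRingHom : E →ₛₗ[ρ] E :=
  { σ with map_smul' := hσ }

/-- The sesquilinear form `(x, y) ↦ S (σ x * y)` attached to a functional `S` and a semilinear
ring endomorphism `σ`. -/
def involutionForm : E →ₛₗ[ρ] E →ₗ[L] L :=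
  (mulForm S).comp (semilinearOfRingHom σ hσ)

@[simp]
theorem involutionForm_apply (x y : E) : involutionForm σ hσ S x y = S (σ x * y) := rfl

theorem involutionForm_mul_left (a x y : E) :
    involutionForm σ hσ S (a * x) y = involutionForm σ hσ S x (σ a * y) := by
  rw [involutionForm_apply, involutionForm_apply, map_mul σ, mul_assoc, mul_left_comm]

theorem isSymm_involutionForm (hσσ : Function.Involutive σ) (hS : ∀ x, S (σ x) = ρ (S x)) :
    (involutionForm σ hσ S).IsSymm :=
  ⟨fun x y => by simp [← hS, hσσ x, mul_comm]⟩

end InvolutionForm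

section FixedSubalgebra

variable {K L E : Type*} [Field K] [Field L] [Algebra K L] {ρ : L ≃ₐ[K] L} [CommRing E]
  [Algebra L E] [Algebra K E] [IsScalarTower K L E] (σ : E →+* E)
  (hσ : ∀ (c : L) (x : E), σ (c • x) = (ρ : L →+* L) c • σ x)

/-- The `K`-algebra of elements fixed by a semilinear ring endomorphism `σ` of an `L`-algebra, where
`σ` lies over a `K`-automorphism of `L`. -/
def fixedSubalgebra : Subalgebra K E where
  __ := σ.eqLocus (RingHom.id E)
  algebraMap_mem' r := by
    change σ _ = _
    rw [IsScalarTower.algebraMap_apply K L E, Algebra.algebraMap_eq_smul_one, hσ, map_one,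
      RingHom.coe_coe, AlgEquiv.commutes]
    rfl

variable [Algebra.IsQuadraticExtension K L] (hρ : ρ ≠ 1) (hσσ : Function.Involutive σ)
include hρ hσσ

theorem isBaseChange_fixedSubalgebra :
    IsBaseChange L (fixedSubalgebra σ hσ).val.toLinearMap :=
  isBaseChange_of_range_eq_fixed (σ := semilinearOfRingHom σ hσ) hρ
    Subtype.val_injective hσσ fun x => ⟨by rintro ⟨y, rfl⟩; exact y.2, fun hx => ⟨⟨x, hx⟩, rfl⟩⟩

theorem etale_fixedSubalgebra [Algebra.Etale L E] : Algebra.Etale K (fixedSubalgebra σ hσ) := by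
  have : Algebra.IsPushout K L (fixedSubalgebra σ hσ) E :=
    ⟨isBaseChange_fixedSubalgebra σ hσ hρ hσσ⟩
  have : Algebra.Etale L (L ⊗[K] fixedSubalgebra σ hσ) :=
    .of_equiv (Algebra.IsPushout.equiv K L (fixedSubalgebra σ hσ) E).symm
  exact .of_etale_tensorProduct_of_faithfullyFlat L

theorem exists_involutionForm [Algebra.Etale L E] :
    ∃ S : E →ₗ[L] L, (involutionForm σ hσ S).IsSymm ∧
      (involutionForm σ hσ S).SeparatingLeft ∧
      HasMaximalWittIndex (involutionForm σ hσ S) := by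
  let F := fixedSubalgebra σ hσ
  have hF : IsBaseChange L F.val.toLinearMap := isBaseChange_fixedSubalgebra σ hσ hρ hσσ
  have : Algebra.Etale K F := etale_fixedSubalgebra σ hσ hρ hσσ
  have : FiniteDimensional K F := Algebra.FormallyUnramified.finite_of_free K F
  obtain ⟨s, hs, hW⟩ := IsSplitFrobenius.of_etale K F
  let S : E →ₗ[L] L := hF.lift (Algebra.linearMap K L ∘ₗ s)
  have hFσ : ∀ x : F, σ x = x := fun x => x.2
  have hSF : ∀ x : F, S x = algebraMap K L (s x) := hF.lift_eq _
  have hS : ∀ x, S (σ x) = ρ (S x) := fun x => by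
    induction x using hF.inductionOn with
    | zero => simp
    | tmul x =>
      change S (σ x) = ρ (S x)
      rw [hFσ, hSF, AlgEquiv.commutes]
    | smul c x hx => simp [hσ, hx]
    | add x y hx hy => simp [hx, hy]
  have hform : ∀ x y : F, involutionForm σ hσ S x y =
      algebraMap K L (mulForm s x y) := fun x y => by
    rw [involutionForm_apply, hFσ, mulForm_apply, ← hSF]; rfl
  exact ⟨S, isSymm_involutionForm σ hσ S hσσ hS, separatingLeft_of_isBaseChange hF hform hs,
    hW.of_isBaseChange hF hform⟩

end FixedSubalgebra

section SesqFormOfFun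

variable {L V : Type*} [Field L] [AddCommGroup V] [Module L V] {ρ : L →+* L} {h : V → V → L}
  (hlin : ∀ (c : L) (x x' y : V), h (c • x + x') y = c * h x y + h x' y)
  (hsemi : ∀ (c : L) (x y y' : V), h x (c • y + y') = ρ c * h x y + h x y')

/-- A sesquilinear form given as a function, linear in the first variable and semilinear in the
second, bundled with its variables interchanged. -/
def sesqFormOfFun : V →ₛₗ[ρ] V →ₗ[L] L :=
  have hzero_left : ∀ y, h 0 y = 0 := fun y => by simpa using hlin 1 0 0 y
  have hzero_right : ∀ x, h x 0 = 0 := fun x => by simpa using hsemi 1 x 0 0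
  LinearMap.mk₂'ₛₗ ρ (RingHom.id L) (fun y x => h x y)
    (fun y y' x => by simpa using hsemi 1 x y y')
    (fun c y x => by simpa [hzero_right] using hsemi c x y 0)
    (fun y x x' => by simpa using hlin 1 x x' y)
    (fun c y x => by simpa [hzero_left] using hlin c x 0 y)

@[simp]
theorem sesqFormOfFun_apply (x y : V) : sesqFormOfFun hlin hsemi y x = h x y := rfl

theorem separatingLeft_sesqFormOfFun (hherm : ∀ x y, h y x = ρ (h x y))
    (hnd : ∀ x, (∀ y, h x y = 0) → x = 0) : (sesqFormOfFun hlin hsemi).SeparatingLeft :=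
  fun y hy => hnd y fun x => by rw [hherm x y, ← sesqFormOfFun_apply hlin hsemi, hy, map_zero]

end SesqFormOfFun

theorem statement9_general {K L E V : Type*} [Field K] [Field L] [Algebra K L]
    [Algebra.IsQuadraticExtension K L] {ρ : L ≃ₐ[K] L} (hρ : ρ ≠ 1) [CommRing E] [Algebra L E]
    [Algebra.Etale L E] (σ : E →+* E) (hσσ : Function.Involutive σ)
    (hσ : ∀ (c : L) (x : E), σ (c • x) = (ρ : L →+* L) c • σ x) [AddCommGroup V] [Module L V]
    [FiniteDimensional L V] (hdim : finrank L V = finrank L E)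
    {B : V →ₛₗ[(ρ : L →+* L)] V →ₗ[L] L} (hsymm : B.IsSymm) (hB : B.SeparatingLeft)
    (hW : HasMaximalWittIndex B) :
    ∃ ι : E →ₐ[L] End L V, Function.Injective ι ∧
      ∀ a x y, B (ι a x) y = B x (ι (σ a) y) := by
  let : Algebra K E := Algebra.compHom E (algebraMap K L)
  have : IsScalarTower K L E := .of_algebraMap_eq fun _ => rfl
  have : FiniteDimensional L E := Algebra.FormallyUnramified.finite_of_free L E
  obtain ⟨l, hl⟩ : ∃ l, ρ l ≠ l := DFunLike.ne_iff.1 hρ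
  obtain ⟨t, ht⟩ := exists_add_apply_eq_one (ρ := (ρ : L →+* L)) (algEquiv_involutive ρ) hl
  obtain ⟨S, hS, hS', hSW⟩ := exists_involutionForm σ hσ hρ hσσ
  obtain ⟨c, _, φ, hφ⟩ :=
    hSW.exists_similitude ρ.surjective ht hdim.symm hS hS' hsymm hB hW
  refine ⟨(φ.conjAlgEquiv L).toAlgHom.comp (Algebra.lmul L E),
    (φ.conjAlgEquiv L).injective.comp Algebra.lmul_injective, fun a x y => ?_⟩
  obtain ⟨x, rfl⟩ := φ.surjective x
  obtain ⟨y, rfl⟩ := φ.surjective y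
  have hadj : B (φ (a * x)) (φ y) = B (φ x) (φ (σ a * y)) := by
    rw [hφ, hφ, involutionForm_mul_left]
  simpa [LinearEquiv.conjAlgEquiv_apply] using hadj

/-- Let `K` be a field of characteristic `≠ 2`, `L/K` a separable quadratic
field extension with nontrivial `K`-automorphism `ρ`, `E` an `n`-dimensional finite étale
commutative `L`-algebra with a `ρ`-semilinear ring involution `σ`.  Let `h` be a nondegenerate
hermitian `ρ`-sesquilinear form on `V = L^n` admitting a totally isotropic subspace of dimension
`⌊n/2⌋`.  Then there is an injective `L`-algebra homomorphism `ι : E → End_L V` with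
`h (ι a x) y = h x (ι (σ a) y)` for all `a ∈ E`, `x, y ∈ V`. -/
theorem statement9 {K L E : Type u} [Field K] [Field L] [Algebra K L]
    [Algebra.IsSeparable K L] (hquad : Module.finrank K L = 2)
    (hchar : ringChar K ≠ 2)
    (ρ : L ≃ₐ[K] L) (hρ : ∃ c : L, ρ c ≠ c)
    [CommRing E] [Algebra L E] [FiniteDimensional L E] [Algebra.Etale L E]
    (n : ℕ) (hdim : Module.finrank L E = n)
    (σ : E →+* E) (hσinv : ∀ x, σ (σ x) = x)
    (hσsemi : ∀ (c : L) (x : E), σ (algebraMap L E c * x) = algebraMap L E (ρ c) * σ x)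
    (h : (Fin n → L) → (Fin n → L) → L)
    (hlin : ∀ (c : L) (x x' y : Fin n → L), h (c • x + x') y = c * h x y + h x' y)
    (hsemi : ∀ (c : L) (x y y' : Fin n → L), h x (c • y + y') = ρ c * h x y + h x y')
    (hherm : ∀ x y : Fin n → L, h y x = ρ (h x y))
    (hnd : ∀ x : Fin n → L, (∀ y : Fin n → L, h x y = 0) → x = 0)
    (hW : ∃ W : Submodule L (Fin n → L), Module.finrank L W = n / 2 ∧
      ∀ w ∈ W, ∀ w' ∈ W, h w w' = 0) :
    ∃ ι : E →ₐ[L] Module.End L (Fin n → L), Function.Injective ι ∧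
      ∀ (a : E) (x y : Fin n → L), h (ι a x) y = h x (ι (σ a) y) := by
  have : Algebra.IsQuadraticExtension K L := { finrank_eq_two' := hquad }
  have hρ1 : ρ ≠ 1 := DFunLike.ne_iff.2 hρ
  obtain ⟨W, hWdim, hWh⟩ := hW
  obtain ⟨ι, hι, hadj⟩ := statement9_general hρ1 σ hσinv
    (fun c x => by simpa only [Algebra.smul_def, RingHom.coe_coe] using hσsemi c x) (by simp [hdim])
    (B := sesqFormOfFun (ρ := (ρ : L →+* L)) hlin hsemi) ⟨fun x y => (hherm y x).symm⟩
    (separatingLeft_sesqFormOfFun hlin hsemi hherm hnd)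
    ⟨W, by simpa using hWdim, fun w hw w' hw' => hWh w' hw' w hw⟩
  refine ⟨ι, hι, fun a x y => ?_⟩
  rw [← hσinv a, hσinv (σ a)]
  exact (hadj (σ a) y x).symm
end

section
/- Let K be an infinite field and let E be a finite étale commutative K-algebra of K-dimension n. Then there exists an element e ∈ E such that 1, e, e², …, e^{n−1} form a K-basis of E; in other words, E is generated as a K-algebra by a single element. -/
universe u

/-!
Over a separable closure `Ω` of `K` the algebra `E` splits, so it has exactly `n = dim E` algebra
homomorphisms to `Ω`. For two distinct ones, the elements of `E` at which they agree form a proper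
`K`-subspace, and the at most `n.choose 2` such subspaces do not cover `E` when `K` is large enough.
An element `e` outside all of them has `n` distinct images in `Ω`, all of them roots of its minimal
polynomial, which therefore has degree `n`: the powers `1, e, …, e ^ (n - 1)` are independent.
-/

open Algebra Function Module

open scoped TensorProduct

section LinearMap

variable {ι K V W : Type*} [Field K] [AddCommGroup V] [Module K V] [AddCommGroup W] [Module K W]

theorem exists_injective_linearMap_apply [Fintype ι] {f : ι → V →ₗ[K] W} (hf : Injective f)
    (hcard : ((Fintype.card ι).choose 2 : ℕ∞) < ENat.card K) :
    ∃ v, Injective fun i ↦ f i v := by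
  classical
  let agreement : Sym2 ι → Submodule K V :=
    Sym2.lift ⟨fun i j ↦ LinearMap.eqLocus (f i) (f j), fun i j ↦ by ext v; exact eq_comm⟩
  have agreement_ne_top (z : {z : Sym2 ι // ¬ z.IsDiag}) : agreement z ≠ ⊤ := by
    obtain ⟨⟨i, j⟩, hij⟩ := z
    exact fun htop ↦ hij (hf (LinearMap.eqLocus_eq_top.mp htop))
  have hunion := Submodule.iUnion_ssubset_of_forall_ne_top_of_card_lt Finset.univ
    (fun z : {z : Sym2 ι // ¬ z.IsDiag} ↦ agreement z) agreement_ne_top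
    (by rwa [Finset.card_univ, Sym2.card_subtype_not_diag])
  obtain ⟨v, -, hv⟩ := Set.exists_of_ssubset hunion
  refine ⟨v, fun i j hij ↦ by_contra fun hne ↦ hv ?_⟩
  exact Set.mem_iUnion₂.mpr ⟨⟨s(i, j), hne⟩, Finset.mem_univ _, hij⟩

end LinearMap

section Etale

variable (K E Ω : Type*) [Field K] [CommRing E] [Algebra K E] [Algebra.Etale K E]
  [Field Ω] [Algebra K Ω] [IsSepClosed Ω]

theorem card_algHom_eq_finrank_of_etale : Nat.card (E →ₐ[K] Ω) = finrank K E := by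
  have : Module.Finite K E := FormallyUnramified.finite_of_free K E
  have : IsArtinianRing (Ω ⊗[K] E) := isArtinian_of_tower Ω inferInstance
  calc Nat.card (E →ₐ[K] Ω)
      = Nat.card (Ω ⊗[K] E →ₐ[Ω] Ω) :=
        Nat.card_congr (AlgHom.liftEquiv K Ω E Ω)
    _ = Nat.card (PrimeSpectrum (Ω ⊗[K] E)) :=
        Nat.card_congr (IsFiniteSplit.algHomEquivPrimeSpectrum Ω (Ω ⊗[K] E))
    _ = finrank Ω (PrimeSpectrum (Ω ⊗[K] E) → Ω) := by
        have := Fintype.ofFinite (PrimeSpectrum (Ω ⊗[K] E))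
        rw [finrank_fintype_fun_eq_card, Nat.card_eq_fintype_card]
    _ = finrank Ω (Ω ⊗[K] E) :=
        (FormallyEtale.equivPiOfIsSepClosed Ω (Ω ⊗[K] E)).toLinearEquiv.finrank_eq.symm
    _ = finrank K E := finrank_baseChange

end Etale

theorem card_algHom_le_natDegree_minpoly {K E Ω : Type*} [Field K] [Ring E] [Algebra K E]
    [CommRing Ω] [IsDomain Ω] [Algebra K Ω] {e : E} (he : IsIntegral K e)
    (hinj : Injective fun φ : E →ₐ[K] Ω ↦ φ e) :
    Nat.card (E →ₐ[K] Ω) ≤ (minpoly K e).natDegree := by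
  have hroot (φ : E →ₐ[K] Ω) : φ e ∈ (minpoly K e).rootSet Ω := by
    rw [Polynomial.mem_rootSet_of_ne (minpoly.ne_zero he), Polynomial.aeval_algHom_apply,
      minpoly.aeval, map_zero]
  calc Nat.card (E →ₐ[K] Ω)
      ≤ Nat.card ((minpoly K e).rootSet Ω) :=
        Nat.card_le_card_of_injective _ (hinj.codRestrict hroot)
    _ ≤ (minpoly K e).natDegree := Polynomial.ncard_rootSet_le _ _

section Generator

variable {K E : Type*} [Field K] [CommRing E] [Algebra K E] {e : E}

theorem adjoin_singleton_eq_top_of_finrank_le_natDegree_minpoly [FiniteDimensional K E]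
    (h : finrank K E ≤ (minpoly K e).natDegree) : adjoin K {e} = ⊤ := by
  rw [← Algebra.toSubmodule_eq_top]
  apply Submodule.eq_top_of_finrank_eq
  apply (Submodule.finrank_le _).antisymm
  rwa [Subalgebra.finrank_toSubmodule,
    (adjoin.powerBasis (Algebra.IsIntegral.isIntegral e)).finrank, adjoin.powerBasis_dim]

theorem exists_basis_pow_of_adjoin_singleton_eq_top (he : IsIntegral K e)
    (htop : adjoin K {e} = ⊤) :
    ∃ B : Basis (Fin (finrank K E)) K E, ∀ i, B i = e ^ (i : ℕ) := by
  let pb := PowerBasis.ofAdjoinEqTop he htop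
  refine ⟨pb.basis.reindex (finCongr pb.finrank.symm), fun i ↦ ?_⟩
  rw [Basis.reindex_apply, pb.basis_eq_pow]
  rfl

end Generator

theorem statement11_general {K E : Type*} [Field K] [CommRing E] [Algebra K E] [Algebra.Etale K E]
    (hcard : ((finrank K E).choose 2 : ℕ∞) < ENat.card K) :
    ∃ e : E, (∃ B : Basis (Fin (finrank K E)) K E, ∀ i, B i = e ^ (i : ℕ)) ∧
      adjoin K {e} = ⊤ := by
  have : FiniteDimensional K E := FormallyUnramified.finite_of_free K E
  let Ω := SeparableClosure K
  have hcount : Nat.card (E →ₐ[K] Ω) = finrank K E := card_algHom_eq_finrank_of_etale K E Ω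
  have := Fintype.ofFinite (E →ₐ[K] Ω)
  obtain ⟨e, hinj⟩ : ∃ e : E, Injective fun φ : E →ₐ[K] Ω ↦ φ e :=
    exists_injective_linearMap_apply (AlgHom.toLinearMap_injective (R := K) (A := E) (B := Ω))
      (by rwa [← Nat.card_eq_fintype_card, hcount])
  have he : IsIntegral K e := Algebra.IsIntegral.isIntegral e
  have htop : adjoin K {e} = ⊤ := adjoin_singleton_eq_top_of_finrank_le_natDegree_minpoly
    (hcount ▸ card_algHom_le_natDegree_minpoly he hinj)
  exact ⟨e, exists_basis_pow_of_adjoin_singleton_eq_top he htop, htop⟩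

/-- Let `K` be an infinite field and `E` a finite étale commutative
`K`-algebra of dimension `n`.  Then there is `e ∈ E` such that `1, e, e², …, e^{n-1}` is a
`K`-basis of `E`; in particular `E` is generated by a single element as a `K`-algebra. -/
theorem statement11 {K E : Type u} [Field K] [Infinite K] [CommRing E] [Algebra K E]
    [FiniteDimensional K E] [Algebra.Etale K E]
    (n : ℕ) (hdim : Module.finrank K E = n) :
    ∃ e : E, (∃ B : Module.Basis (Fin n) K E, ∀ i : Fin n, B i = e ^ (i : ℕ)) ∧
      Algebra.adjoin K {e} = ⊤ := by
  subst hdim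
  exact statement11_general (by simp)
end

section
/- Let ℓ ≥ 1, n = 2ℓ + 1, and let r be an integer with 0 ≤ r ≤ n; set s = min(r, n − r). Let α, β, γ be nonnegative integers with α + β + 2γ = ℓ and α + 2γ ≤ s. Let (E, σ) be the real étale algebra with involution E = ℝ × (ℝ × ℝ)^α × ℂ^β × (ℂ × ℂ)^γ, where σ is the identity on the ℝ factor, the switch of coordinates on each ℝ × ℝ factor, complex conjugation on each ℂ factor, and the switch of coordinates on each ℂ × ℂ factor. Let f be the symmetric bilinear form on ℝ^n associated to the quadratic form r⟨1⟩ ⊥ (n − r)⟨−1⟩ (i.e. the diagonal form with r entries +1 and n − r entries −1). Then there exists an injective ℝ-algebra homomorphism ι : E → End_ℝ(ℝ^n) such that f(ι(a)x, y) = f(x, ι(σ(a))y) for all a ∈ E and x, y ∈ ℝ^n. -/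
/-- The real étale algebra `ℝ × (ℝ × ℝ)^α × ℂ^β × (ℂ × ℂ)^γ`. -/
abbrev RealEtaleAlgB (α β γ : ℕ) : Type :=
  ℝ × (Fin α → ℝ × ℝ) × (Fin β → ℂ) × (Fin γ → ℂ × ℂ)

/-- The involution of `ℝ × (ℝ × ℝ)^α × ℂ^β × (ℂ × ℂ)^γ`: identity on the `ℝ` factor, the
coordinate switch on each `ℝ × ℝ` factor, complex conjugation on each `ℂ` factor, and the
coordinate switch on each `ℂ × ℂ` factor. -/
def sigmaB (α β γ : ℕ) : RealEtaleAlgB α β γ → RealEtaleAlgB α β γ :=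
  fun x =>
    (x.1, fun i => ((x.2.1 i).2, (x.2.1 i).1),
      fun i => (starRingEnd ℂ) (x.2.2.1 i),
      fun i => ((x.2.2.2 i).2, (x.2.2.2 i).1))

/-- The symmetric bilinear form on `ℝ^n` associated to the quadratic form
`r⟨1⟩ ⊥ (n - r)⟨-1⟩`. -/
def diagRForm (n r : ℕ) (x y : Fin n → ℝ) : ℝ :=
  ∑ i : Fin n, (if (i : ℕ) < r then (1 : ℝ) else -1) * x i * y i

/-!
A real form is determined up to isometry by its signature, so it suffices to find a form on `E`
itself that has signature `(r, n - r)` and for which multiplication by `a` is adjoint to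
multiplication by `σ a`. Such a form can be chosen factor by factor: `±x²` on `ℝ`, `±|z|²`
on each `ℂ`, the product `x y` on `ℝ × ℝ` and `Re (z w)` on `ℂ × ℂ`. The switched factors contribute
the signature `(α + 2γ, α + 2γ)` whatever the choices, while the free signs on `ℝ` and on the `ℂ`
factors realise all the signatures allowed by `α + 2γ ≤ s`.
-/

open Matrix

section SignForm

variable {R : Type*} [CommRing R] {P Q P' Q' : Type*} [Fintype P] [Fintype Q] [Fintype P']
  [Fintype Q']

/-- The diagonal bilinear form with `|P|` entries `1` and `|Q|` entries `-1`, on coordinate vectors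
that are split into their positive part and their negative part. -/
def signForm : LinearMap.BilinForm R ((P → R) × (Q → R)) :=
  (dotProductBilin R R).compl₁₂ (.fst R _ _) (.fst R _ _) -
    (dotProductBilin R R).compl₁₂ (.snd R _ _) (.snd R _ _)

lemma signForm_apply (u v : (P → R) × (Q → R)) :
    signForm u v = u.1 ⬝ᵥ v.1 - u.2 ⬝ᵥ v.2 :=
  rfl

lemma signForm_swap (u v : (P → R) × (Q → R)) : signForm u.swap v.swap = -signForm u v :=
  (neg_sub _ _).symm

lemma signForm_sumElim (u v : (P → R) × (Q → R)) (u' v' : (P' → R) × (Q' → R)) :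
    signForm (Sum.elim u.1 u'.1, Sum.elim u.2 u'.2) (Sum.elim v.1 v'.1, Sum.elim v.2 v'.2) =
      signForm u v + signForm u' v' := by
  simp only [signForm_apply, sumElim_dotProduct_sumElim]
  ring

lemma signForm_sigma {ι : Type*} [Fintype ι] {P Q : ι → Type*} [∀ i, Fintype (P i)]
    [∀ i, Fintype (Q i)] (u v : ∀ i, (P i → R) × (Q i → R)) :
    signForm (fun x : Σ i, P i => (u x.1).1 x.2, fun x : Σ i, Q i => (u x.1).2 x.2)
        (fun x => (v x.1).1 x.2, fun x => (v x.1).2 x.2) =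
      ∑ i, signForm (u i) (v i) := by
  simp only [signForm_apply, dotProduct, Fintype.sum_sigma, Finset.sum_sub_distrib]

end SignForm

section AdmitsSignature

variable {R : Type*} [CommRing R] {A A' : Type*} [Ring A] [Algebra R A] [Ring A'] [Algebra R A']
  {σ : A → A} {σ' : A' → A'} {p q p' q' : ℕ}

variable (R) in
/-- The `R`-module `A` carries a bilinear form isometric to `p⟨1⟩ ⊥ q⟨-1⟩` for which left
multiplication by `a` is adjoint to left multiplication by `σ a`. The form is encoded by the
coordinates `φ` in which it is diagonal. -/
def AdmitsSignature (σ : A → A) (p q : ℕ) : Prop :=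
  ∃ φ : A ≃ₗ[R] (Fin p → R) × (Fin q → R),
    ∀ a x y, signForm (φ (a * x)) (φ y) = signForm (φ x) (φ (σ a * y))

namespace AdmitsSignature

lemma of_linearEquiv {P Q : Type*} [Fintype P] [Fintype Q] (φ : A ≃ₗ[R] (P → R) × (Q → R))
    (hφ : ∀ a x y, signForm (φ (a * x)) (φ y) = signForm (φ x) (φ (σ a * y))) :
    AdmitsSignature R σ (Fintype.card P) (Fintype.card Q) := by
  refine ⟨φ ≪≫ₗ (LinearEquiv.funCongrLeft R R (Fintype.equivFin P).symm).prodCongr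
    (LinearEquiv.funCongrLeft R R (Fintype.equivFin Q).symm), fun a x y => ?_⟩
  simpa [signForm_apply, LinearEquiv.funCongrLeft_apply, LinearMap.funLeft,
    Function.comp_assoc] using hφ a x y

lemma neg (h : AdmitsSignature R σ p q) : AdmitsSignature R σ q p := by
  obtain ⟨φ, hφ⟩ := h
  refine ⟨φ ≪≫ₗ LinearEquiv.prodComm R _ _, fun a x y => ?_⟩
  simp only [LinearEquiv.trans_apply, LinearEquiv.prodComm_apply, signForm_swap, hφ]

lemma of_linearEquiv_prod (φ : A ≃ₗ[R] ((Fin p → R) × (Fin q → R)) × (Fin p' → R) × (Fin q' → R))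
    (hφ : ∀ a x y, signForm (φ (a * x)).1 (φ y).1 + signForm (φ (a * x)).2 (φ y).2 =
      signForm (φ x).1 (φ (σ a * y)).1 + signForm (φ x).2 (φ (σ a * y)).2) :
    AdmitsSignature R σ (p + p') (q + q') := by
  have h := of_linearEquiv (σ := σ) (φ ≪≫ₗ LinearEquiv.prodProdProdComm R _ _ _ _ ≪≫ₗ
    (LinearEquiv.sumArrowLequivProdArrow (Fin p) (Fin p') R R).symm.prodCongr
      (LinearEquiv.sumArrowLequivProdArrow (Fin q) (Fin q') R R).symm) fun a x y =>
    (signForm_sumElim _ _ _ _).trans ((hφ a x y).trans (signForm_sumElim _ _ _ _).symm)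
  simpa only [Fintype.card_sum, Fintype.card_fin] using h

lemma prod (h : AdmitsSignature R σ p q) (h' : AdmitsSignature R σ' p' q') :
    AdmitsSignature R (Prod.map σ σ') (p + p') (q + q') := by
  obtain ⟨φ, hφ⟩ := h
  obtain ⟨φ', hφ'⟩ := h'
  exact of_linearEquiv_prod (φ.prodCongr φ') fun a x y =>
    congrArg₂ (· + ·) (hφ a.1 x.1 y.1) (hφ' a.2 x.2 y.2)

lemma pi {ι : Type*} [Fintype ι] {B : ι → Type*} [∀ i, Ring (B i)] [∀ i, Algebra R (B i)]
    {τ : ∀ i, B i → B i} {p q : ι → ℕ} (h : ∀ i, AdmitsSignature R (τ i) (p i) (q i)) :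
    AdmitsSignature R (Pi.map τ) (∑ i, p i) (∑ i, q i) := by
  choose φ hφ using h
  let splitSigns : (∀ i, (Fin (p i) → R) × (Fin (q i) → R)) ≃ₗ[R]
      (∀ i, Fin (p i) → R) × (∀ i, Fin (q i) → R) :=
    { Equiv.arrowProdEquivProdArrow ι _ _ with
      map_add' := fun _ _ => rfl
      map_smul' := fun _ _ => rfl }
  have h := of_linearEquiv (σ := Pi.map τ) (LinearEquiv.piCongrRight φ ≪≫ₗ splitSigns ≪≫ₗ
    (LinearEquiv.piCurry R fun i (_ : Fin (p i)) => R).symm.prodCongr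
      (LinearEquiv.piCurry R fun i (_ : Fin (q i)) => R).symm) fun a x y => by
    refine (signForm_sigma _ _).trans (.trans ?_ (signForm_sigma _ _).symm)
    exact Finset.sum_congr rfl fun i _ => hφ i (a i) (x i) (y i)
  simpa only [Fintype.card_sigma, Fintype.card_fin] using h

lemma pow (h : AdmitsSignature R σ p q) (k m : ℕ) :
    AdmitsSignature R (Pi.map fun _ : Fin (k + m) => σ) (k * p + m * q) (k * q + m * p) := by
  have hi (i : Fin (k + m)) : AdmitsSignature R σ
      (Fin.append (fun _ : Fin k => p) (fun _ : Fin m => q) i)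
      (Fin.append (fun _ : Fin k => q) (fun _ : Fin m => p) i) := by
    refine Fin.addCases (fun i => ?_) (fun i => ?_) i
    · simpa only [Fin.append_left] using h
    · simpa only [Fin.append_right] using h.neg
  simpa [Fin.sum_univ_add] using pi hi

/- If `b` is the form on `A`, then `b(x, y') + b(y, x')` on `A × A` becomes `b ⊥ -b`, up to the
factor `2`, in the coordinates `x + y` and `x - y`. -/
lemma double [Invertible (2 : R)] (h : AdmitsSignature R σ p q) :
    AdmitsSignature R (fun a : A × A => (σ a.2, σ a.1)) (p + q) (q + p) := by
  obtain ⟨φ, hφ⟩ := h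
  let sumDiff : (A × A) ≃ₗ[R] A × A :=
    { toFun := fun x => (x.1 + x.2, x.1 - x.2)
      invFun := fun x => ((⅟2 : R) • (x.1 + x.2), (⅟2 : R) • (x.1 - x.2))
      map_add' := fun x y => Prod.ext (add_add_add_comm ..) (add_sub_add_comm ..)
      map_smul' := fun c x => Prod.ext (smul_add ..).symm (smul_sub ..).symm
      left_inv := fun x => by
        simp only [add_add_sub_cancel, add_sub_sub_cancel, smul_add,
          invOf_two_smul_add_invOf_two_smul]
      right_inv := fun x => by
        simp only [← smul_add, ← smul_sub, add_add_sub_cancel, add_sub_sub_cancel]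
        simp only [smul_add, invOf_two_smul_add_invOf_two_smul] }
  refine of_linearEquiv_prod
    (sumDiff ≪≫ₗ φ.prodCongr (φ ≪≫ₗ LinearEquiv.prodComm R _ _)) fun a x y => ?_
  change signForm (φ (a.1 * x.1 + a.2 * x.2)) (φ (y.1 + y.2)) +
      signForm (φ (a.1 * x.1 - a.2 * x.2)).swap (φ (y.1 - y.2)).swap =
    signForm (φ (x.1 + x.2)) (φ (σ a.2 * y.1 + σ a.1 * y.2)) +
      signForm (φ (x.1 - x.2)).swap (φ (σ a.2 * y.1 - σ a.1 * y.2)).swap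
  simp only [signForm_swap, map_add, map_sub, LinearMap.add_apply, LinearMap.sub_apply, hφ]
  ring

end AdmitsSignature

end AdmitsSignature

lemma admitsSignature_id (R : Type*) [CommRing R] : AdmitsSignature R (id : R → R) 1 0 := by
  refine .of_linearEquiv (P := Unit) (Q := Empty)
    ((LinearEquiv.funUnique Unit R R).symm ≪≫ₗ LinearEquiv.prodUnique.symm) fun a x y => ?_
  simp only [LinearEquiv.trans_apply, LinearEquiv.funUnique_symm_apply,
    LinearEquiv.prodUnique_symm_apply, signForm_apply, dotProduct_pUnit,
    AddEquiv.funUnique_symm_apply, dotProduct_of_isEmpty, sub_zero, id_eq]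
  ring

lemma admitsSignature_complex_conj : AdmitsSignature ℝ (starRingEnd ℂ) 2 0 := by
  refine .of_linearEquiv (P := Fin 2) (Q := Empty)
    (Complex.basisOneI.equivFun ≪≫ₗ LinearEquiv.prodUnique.symm) fun a x y => ?_
  simp only [LinearEquiv.trans_apply, Module.Basis.equivFun_apply, Complex.coe_basisOneI_repr,
    Complex.mul_re, Complex.mul_im, LinearEquiv.prodUnique_symm_apply, signForm_apply,
    dotProduct_cons, head_cons, tail_cons, dotProduct_of_isEmpty, Complex.conj_re, Complex.conj_im]
  ring

lemma admitsSignature_complex_id : AdmitsSignature ℝ (id : ℂ → ℂ) 1 1 := by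
  refine .of_linearEquiv (P := Unit) (Q := Unit) (Complex.equivRealProdLm ≪≫ₗ
    (LinearEquiv.funUnique Unit ℝ ℝ).symm.prodCongr (LinearEquiv.funUnique Unit ℝ ℝ).symm)
    fun a x y => ?_
  simp only [LinearEquiv.trans_apply, Complex.equivRealProdLm_apply, Complex.mul_re,
    Complex.mul_im, LinearEquiv.prodCongr_apply, LinearEquiv.funUnique_symm_apply, signForm_apply,
    dotProduct_pUnit, AddEquiv.funUnique_symm_apply, id_eq]
  ring

lemma admitsSignature_sigmaB_add (α γ k m : ℕ) :
    AdmitsSignature ℝ (sigmaB α (k + m) γ) (1 + α + 2 * k + 2 * γ) (α + 2 * m + 2 * γ) := by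
  have hReal : AdmitsSignature ℝ (Pi.map fun _ : Fin α => fun a : ℝ × ℝ => (a.2, a.1)) α α := by
    simpa using AdmitsSignature.pi fun _ : Fin α => (admitsSignature_id ℝ).double
  have hConj : AdmitsSignature ℝ (Pi.map fun _ : Fin (k + m) => starRingEnd ℂ) (k * 2) (m * 2) := by
    simpa using admitsSignature_complex_conj.pow k m
  have hComplex : AdmitsSignature ℝ (Pi.map fun _ : Fin γ => fun a : ℂ × ℂ => (a.2, a.1))
      (γ * 2) (γ * 2) := by
    simpa using AdmitsSignature.pi fun _ : Fin γ => admitsSignature_complex_id.double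
  convert (admitsSignature_id ℝ).prod (hReal.prod (hConj.prod hComplex)) using 1
  · rfl
  · ring
  · ring

lemma admitsSignature_sigmaB {α β γ r q : ℕ} (hn : r + q = 2 * (α + β + 2 * γ) + 1)
    (hr : α + 2 * γ ≤ r) (hq : α + 2 * γ ≤ q) : AdmitsSignature ℝ (sigmaB α β γ) r q := by
  -- The parity of `r - α` decides the sign of the form on the factor `ℝ`.
  rcases Nat.even_or_odd' (r - (α + 2 * γ)) with ⟨k, hk | hk⟩
  · obtain ⟨m, rfl⟩ : ∃ m, β = m + k := ⟨β - k, by omega⟩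
    convert (admitsSignature_sigmaB_add α γ m k).neg using 1 <;> omega
  · obtain ⟨m, rfl⟩ : ∃ m, β = k + m := ⟨β - k, by omega⟩
    convert admitsSignature_sigmaB_add α γ k m using 1 <;> omega

lemma diagRForm_eq_signForm {p q : ℕ} (x y : Fin (p + q) → ℝ) :
    diagRForm (p + q) p x y =
      signForm ((Fin.appendEquiv p q).symm x) ((Fin.appendEquiv p q).symm y) := by
  simp [diagRForm, signForm_apply, dotProduct, Fin.appendEquiv, Fin.sum_univ_add, sub_eq_add_neg]

/- The regular representation of `A`, written in diagonalising coordinates, is the required map. -/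
lemma AdmitsSignature.exists_algHom {A : Type*} [Ring A] [Algebra ℝ A] {σ : A → A} {p q : ℕ}
    (h : AdmitsSignature ℝ σ p q) :
    ∃ ι : A →ₐ[ℝ] Module.End ℝ (Fin (p + q) → ℝ), Function.Injective ι ∧
      ∀ a x y, diagRForm (p + q) p (ι a x) y = diagRForm (p + q) p x (ι (σ a) y) := by
  obtain ⟨φ, hφ⟩ := h
  let restrict : (Fin (p + q) → ℝ) ≃ₗ[ℝ] (Fin p → ℝ) × (Fin q → ℝ) :=
    { (Fin.appendEquiv p q).symm with
      map_add' := fun _ _ => rfl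
      map_smul' := fun _ _ => rfl }
  let ψ : A ≃ₗ[ℝ] (Fin (p + q) → ℝ) := φ ≪≫ₗ restrict.symm
  have hψ (u v : A) : diagRForm (p + q) p (ψ u) (ψ v) = signForm (φ u) (φ v) := by
    rw [diagRForm_eq_signForm]
    exact congrArg₂ (signForm · ·) (restrict.apply_symm_apply _) (restrict.apply_symm_apply _)
  refine ⟨(ψ.conjAlgEquiv ℝ).toAlgHom.comp (Algebra.lmul ℝ A),
    (ψ.conjAlgEquiv ℝ).injective.comp Algebra.lmul_injective, fun a x y => ?_⟩
  obtain ⟨u, rfl⟩ := ψ.surjective x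
  obtain ⟨v, rfl⟩ := ψ.surjective y
  simpa [LinearEquiv.conjAlgEquiv_apply, hψ] using hφ a u v

/-- Let `ℓ ≥ 1`, `n = 2ℓ + 1`, `0 ≤ r ≤ n`, `s = min r (n - r)`, and let
`α, β, γ` be nonnegative integers with `α + β + 2γ = ℓ` and `α + 2γ ≤ s`.  Let `(E, σ)` be the
real étale algebra with involution `ℝ × (ℝ × ℝ)^α × ℂ^β × (ℂ × ℂ)^γ` and let `f` be the
symmetric bilinear form of signature `(r, n - r)` on `ℝ^n`.  Then there is an injective
`ℝ`-algebra homomorphism `ι : E → End_ℝ (ℝ^n)` with `f (ι a x) y = f x (ι (σ a) y)`. -/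
theorem statement12 (ℓ r α β γ : ℕ) (hℓ : 1 ≤ ℓ) (hr : r ≤ 2 * ℓ + 1)
    (hsum : α + β + 2 * γ = ℓ) (hle : α + 2 * γ ≤ min r (2 * ℓ + 1 - r)) :
    ∃ ι : RealEtaleAlgB α β γ →ₐ[ℝ] Module.End ℝ (Fin (2 * ℓ + 1) → ℝ),
      Function.Injective ι ∧
        ∀ (a : RealEtaleAlgB α β γ) (x y : Fin (2 * ℓ + 1) → ℝ),
          diagRForm (2 * ℓ + 1) r (ι a x) y =
            diagRForm (2 * ℓ + 1) r x (ι (sigmaB α β γ a) y) := by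
  obtain ⟨q, hq⟩ := Nat.exists_eq_add_of_le hr
  obtain ⟨hrle, hqle⟩ := le_min_iff.mp hle
  have hE : AdmitsSignature ℝ (sigmaB α β γ) r q :=
    admitsSignature_sigmaB (by omega) hrle (by omega)
  rw [hq]
  exact hE.exists_algHom
end

section
/- Let ℓ ≥ 1, n = 2ℓ + 1, and let r be an integer with 0 ≤ r ≤ n. Let α, β, γ be nonnegative integers with α + β + 2γ = ℓ, and let (E, σ) be the real étale algebra with involution E = ℝ × (ℝ × ℝ)^α × ℂ^β × (ℂ × ℂ)^γ, where σ is the identity on the ℝ factor, the switch of coordinates on each ℝ × ℝ factor, complex conjugation on each ℂ factor, and the switch of coordinates on each ℂ × ℂ factor. Let f be a nondegenerate symmetric bilinear form on ℝ^n of signature (r, n − r), i.e. equivalent to the diagonal form with r entries +1 and n − r entries −1. If there exists an injective ℝ-algebra homomorphism ι : E → End_ℝ(ℝ^n) such that f(ι(a)x, y) = f(x, ι(σ(a))y) for all a ∈ E and x, y ∈ ℝ^n, then α + 2γ ≤ min(r, n − r). -/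
/-!
Since `E` is a finite product of fields, it has finitely many ideals. For a faithful representation
`ι` of `E`, each nonzero ideal annihilates a proper subspace of vectors only, and a real vector
space is not a finite union of proper subspaces; hence some `v` satisfies `ι a v ≠ 0` for every
`a ≠ 0`. The first coordinates of the switched factors form an `(α + 2γ)`-dimensional subspace `W`
of `E` on which `σ a * a = 0`, so that `f (ι a v) (ι a v) = f v (ι (σ a * a) v) = 0` for `a ∈ W`.
Thus `ι(W) v` is a totally isotropic subspace of dimension `α + 2γ`; it meets definite subspaces
trivially, in particular one of dimension `r` and one of dimension `n - r`.
-/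

open Module QuadraticForm QuadraticMap

section SeparatingVector

instance finite_ideal_of_isSemisimpleRing {R : Type*} [CommRing R] [IsSemisimpleRing R] :
    Finite (Ideal R) := by
  have : Finite (fullyInvariantSubmodule R R) :=
    .of_equiv _ (OrderIso.setIsotypicComponents (R := R) (M := R)).toEquiv
  exact .of_injective (fun I : Ideal R ↦
      (⟨I, isFullyInvariant_iff_isTwoSided.mpr inferInstance⟩ : fullyInvariantSubmodule R R))
    fun _ _ h ↦ congrArg Subtype.val h

theorem exists_injective_apply_of_finite_ideal {K R V : Type*} [Field K] [Infinite K] [Ring R]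
    [Finite (Ideal R)] [AddCommGroup V] [Module K V] (ρ : R →+* End K V)
    (hρ : Function.Injective ρ) : ∃ v : V, Function.Injective fun a ↦ ρ a v := by
  let annihilated (I : {I : Ideal R // I ≠ ⊥}) : Submodule K V := ⨅ a ∈ I.1, LinearMap.ker (ρ a)
  have annihilated_ne_top (I) : annihilated I ≠ ⊤ := by
    intro hI
    obtain ⟨a, haI, ha⟩ := Submodule.exists_mem_ne_zero_of_ne_bot I.2
    simp only [annihilated, iInf_eq_top, LinearMap.ker_eq_top] at hI
    exact ha ((map_eq_zero_iff ρ hρ).mp (hI a haI))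
  obtain ⟨v, hv⟩ := Submodule.exists_forall_notMem_of_forall_ne_top annihilated annihilated_ne_top
  refine ⟨v, (injective_iff_map_eq_zero
    ((LinearMap.applyₗ (R := K) v).toAddMonoidHom.comp ρ.toAddMonoidHom)).mpr fun a hav ↦ ?_⟩
  by_contra ha
  refine hv ⟨Ideal.span {a}, by simpa using ha⟩ ?_
  simp only [annihilated, Submodule.mem_iInf, LinearMap.mem_ker, Ideal.mem_span_singleton']
  rintro _ ⟨b, rfl⟩
  rw [map_mul, Module.End.mul_apply, show ρ a v = 0 from hav, map_zero]

end SeparatingVector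

section IsotropicSubspace

variable {K V : Type*} [Field K] [LinearOrder K] [AddCommGroup V] [Module K V]
  [FiniteDimensional K V]

theorem finrank_add_max_sigPos_sigNeg_le_of_isotropic
    {Q : QuadraticForm K V} {U : Submodule K V} (hU : ∀ x ∈ U, Q x = 0) :
    finrank K U + max (sigPos Q) (sigNeg Q) ≤ finrank K V := by
  have hpos : sigPos Q + finrank K U ≤ finrank K V :=
    sigPos_add_finrank_le_of_nonpos fun x hx ↦ (hU x hx).le
  have hneg : sigNeg Q + finrank K U ≤ finrank K V :=
    sigPos_add_finrank_le_of_nonpos fun x hx ↦ by simp [hU x hx]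
  omega

theorem finrank_add_max_sigPos_sigNeg_le_of_isAdjointPair [IsStrictOrderedRing K]
    {A : Type*} [Ring A] [Algebra K A] [Finite (Ideal A)]
    (B : LinearMap.BilinForm K V) (ρ : A →ₐ[K] End K V) (hρ : Function.Injective ρ) (σ : A → A)
    (hσ : ∀ a, LinearMap.IsAdjointPair B B (ρ a) (ρ (σ a)))
    (W : Submodule K A) (hW : ∀ a ∈ W, σ a * a = 0) :
    finrank K W + max (sigPos B.toQuadraticMap) (sigNeg B.toQuadraticMap) ≤ finrank K V := by
  obtain ⟨v, hv⟩ := exists_injective_apply_of_finite_ideal (ρ : A →+* End K V) hρ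
  let evalAt : A →ₗ[K] V := LinearMap.applyₗ v ∘ₗ ρ.toLinearMap
  have evalAt_injective : Function.Injective evalAt := hv
  rw [(W.equivMapOfInjective evalAt evalAt_injective).finrank_eq]
  refine finrank_add_max_sigPos_sigNeg_le_of_isotropic ?_
  rintro _ ⟨a, ha, rfl⟩
  calc B (ρ a v) (ρ a v) = B v (ρ (σ a) (ρ a v)) := hσ a v (ρ a v)
    _ = B v (ρ (σ a * a) v) := by rw [map_mul, Module.End.mul_apply]
    _ = 0 := by rw [hW a ha, map_zero, LinearMap.zero_apply, map_zero]

end IsotropicSubspace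

section DiagonalForm

/-- The bilinear form with diagonal Gram matrix `r⟨1⟩ ⊥ (n - r)⟨-1⟩`: a bundled version of
`diagRForm`, to which the theory of quadratic forms applies. -/
noncomputable def diagRBilin (n r : ℕ) : LinearMap.BilinForm ℝ (Fin n → ℝ) :=
  Matrix.toBilin' (Matrix.diagonal fun i : Fin n ↦ if (i : ℕ) < r then 1 else -1)

theorem diagRBilin_apply (n r : ℕ) (x y : Fin n → ℝ) : diagRBilin n r x y = diagRForm n r x y := by
  simp only [diagRBilin, Matrix.toBilin'_apply', dotProduct, Matrix.mulVec_diagonal, diagRForm]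
  exact Finset.sum_congr rfl fun i _ ↦ by ring

theorem toQuadraticMap_diagRBilin (n r : ℕ) : (diagRBilin n r).toQuadraticMap =
    weightedSumSquares ℝ fun i : Fin n ↦ if (i : ℕ) < r then (1 : ℝ) else -1 := by
  ext x
  simp only [LinearMap.BilinMap.toQuadraticMap_apply, diagRBilin_apply, diagRForm,
    weightedSumSquares_apply, smul_eq_mul, mul_assoc]

theorem sigPos_diagRBilin {n r : ℕ} (hr : r ≤ n) : sigPos (diagRBilin n r).toQuadraticMap = r := by
  have positive_weights : {i : Fin n | 0 < if (i : ℕ) < r then (1 : ℝ) else -1} =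
      ({i : Fin n | (i : ℕ) < r} : Finset (Fin n)) := by
    ext i
    by_cases hi : (i : ℕ) < r <;> simp [hi]
  rw [toQuadraticMap_diagRBilin, sigPos_weightedSumSquares, positive_weights,
    Set.ncard_coe_finset, Fin.card_filter_val_lt, min_eq_right hr]

theorem sigNeg_diagRBilin {n r : ℕ} (hr : r ≤ n) :
    sigNeg (diagRBilin n r).toQuadraticMap = n - r := by
  have negative_weights : {i : Fin n | (if (i : ℕ) < r then (1 : ℝ) else -1) < 0} =
      (({i : Fin n | (i : ℕ) < r} : Finset (Fin n))ᶜ : Finset (Fin n)) := by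
    ext i
    rcases lt_or_ge (i : ℕ) r with hi | hi
    · simp [hi, not_lt.mpr zero_le_one]
    · simp [hi, hi.not_gt]
  rw [toQuadraticMap_diagRBilin, sigNeg_weightedSumSquares, negative_weights,
    Set.ncard_coe_finset, Finset.card_compl, Fintype.card_fin, Fin.card_filter_val_lt,
    min_eq_right hr]

end DiagonalForm

section SwitchedHalf

variable (α β γ : ℕ)

/-- The inclusion of `ℝ^α × ℂ^γ` into the algebra as the first coordinates of the factors `ℝ × ℝ`
and `ℂ × ℂ` whose coordinates `sigmaB` switches. -/
def switchedHalf : (Fin α → ℝ) × (Fin γ → ℂ) →ₗ[ℝ] RealEtaleAlgB α β γ where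
  toFun u := (0, fun i ↦ (u.1 i, 0), 0, fun k ↦ (u.2 k, 0))
  map_add' _ _ := by ext <;> simp
  map_smul' _ _ := by ext <;> simp

theorem switchedHalf_injective : Function.Injective (switchedHalf α β γ) := by
  intro u w h
  simp only [switchedHalf, LinearMap.coe_mk, AddHom.coe_mk, Prod.ext_iff, funext_iff] at h
  exact Prod.ext (funext fun i ↦ (h.2.1 i).1) (funext fun k ↦ (h.2.2.2 k).1)

theorem sigmaB_switchedHalf_mul_self (u : (Fin α → ℝ) × (Fin γ → ℂ)) :
    sigmaB α β γ (switchedHalf α β γ u) * switchedHalf α β γ u = 0 := by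
  ext <;> simp [switchedHalf, sigmaB]

theorem finrank_range_switchedHalf :
    finrank ℝ (LinearMap.range (switchedHalf α β γ)) = α + 2 * γ := by
  rw [LinearMap.finrank_range_of_inj (switchedHalf_injective α β γ), finrank_prod,
    finrank_pi, finrank_pi_fintype]
  simp [Complex.finrank_real_complex, mul_comm]

end SwitchedHalf

theorem statement13_general {V : Type*} [AddCommGroup V] [Module ℝ V] (n r α β γ : ℕ) (hr : r ≤ n)
    (f : V → V → ℝ)
    (hf : ∃ g : V ≃ₗ[ℝ] (Fin n → ℝ), ∀ x y, f x y = diagRForm n r (g x) (g y))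
    (ι : RealEtaleAlgB α β γ →ₐ[ℝ] End ℝ V) (hinj : Function.Injective ι)
    (hcompat : ∀ (a : RealEtaleAlgB α β γ) (x y : V),
      f (ι a x) y = f x (ι (sigmaB α β γ a) y)) :
    α + 2 * γ ≤ min r (n - r) := by
  obtain ⟨g, hg⟩ := hf
  have : FiniteDimensional ℝ V := g.symm.finiteDimensional
  let B : LinearMap.BilinForm ℝ V := (diagRBilin n r).compl₁₂ g.toLinearMap g.toLinearMap
  have hB (x y : V) : B x y = f x y := by rw [hg, ← diagRBilin_apply]; rfl
  have hBdiag : Equivalent B.toQuadraticMap (diagRBilin n r).toQuadraticMap := ⟨g, fun _ ↦ rfl⟩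
  have hadjoint (a) : LinearMap.IsAdjointPair B B (ι a) (ι (sigmaB α β γ a)) := fun x y ↦ by
    rw [hB, hB, hcompat]
  have hisotropic : ∀ a ∈ LinearMap.range (switchedHalf α β γ), sigmaB α β γ a * a = 0 := by
    rintro _ ⟨u, rfl⟩
    exact sigmaB_switchedHalf_mul_self α β γ u
  have finrank_le := finrank_add_max_sigPos_sigNeg_le_of_isAdjointPair B ι hinj (sigmaB α β γ)
    hadjoint (LinearMap.range (switchedHalf α β γ)) hisotropic
  rw [finrank_range_switchedHalf, hBdiag.sigPos_eq, hBdiag.sigNeg_eq, sigPos_diagRBilin hr,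
    sigNeg_diagRBilin hr, g.finrank_eq, finrank_fin_fun] at finrank_le
  omega

/-- Let `ℓ ≥ 1`, `n = 2ℓ + 1`, `0 ≤ r ≤ n`, and let `α, β, γ` be nonnegative
integers with `α + β + 2γ = ℓ`.  Let `(E, σ)` be the real étale algebra with involution
`ℝ × (ℝ × ℝ)^α × ℂ^β × (ℂ × ℂ)^γ` and let `f` be a nondegenerate symmetric bilinear form on
`ℝ^n` of signature `(r, n - r)`, i.e. equivalent to the diagonal form with `r` entries `+1` and
`n - r` entries `-1`.  If there is an injective `ℝ`-algebra homomorphism `ι : E → End_ℝ (ℝ^n)`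
with `f (ι a x) y = f x (ι (σ a) y)` for all `a, x, y`, then `α + 2γ ≤ min r (n - r)`. -/
theorem statement13 (ℓ r α β γ : ℕ) (hℓ : 1 ≤ ℓ) (hr : r ≤ 2 * ℓ + 1)
    (hsum : α + β + 2 * γ = ℓ)
    (f : (Fin (2 * ℓ + 1) → ℝ) → (Fin (2 * ℓ + 1) → ℝ) → ℝ)
    (hf : ∃ g : (Fin (2 * ℓ + 1) → ℝ) ≃ₗ[ℝ] (Fin (2 * ℓ + 1) → ℝ),
      ∀ x y, f x y = diagRForm (2 * ℓ + 1) r (g x) (g y))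
    (ι : RealEtaleAlgB α β γ →ₐ[ℝ] Module.End ℝ (Fin (2 * ℓ + 1) → ℝ))
    (hinj : Function.Injective ι)
    (hcompat : ∀ (a : RealEtaleAlgB α β γ) (x y : Fin (2 * ℓ + 1) → ℝ),
      f (ι a x) y = f x (ι (sigmaB α β γ a) y)) :
    α + 2 * γ ≤ min r (2 * ℓ + 1 - r) := by
  exact statement13_general (2 * ℓ + 1) r α β γ hr f hf ι hinj hcompat
end

section
/- Let ℍ denote the real quaternions with standard quaternionic conjugation. Let ℓ ≥ 1, let r be an integer with 0 ≤ r ≤ ℓ, and let β, γ be nonnegative integers with β + 2γ = ℓ and γ ≤ min(r, ℓ − r). Let (E, σ) be the real étale algebra with involution E = ℂ^β × (ℂ × ℂ)^γ, where σ is complex conjugation on each ℂ factor and the switch of coordinates on each ℂ × ℂ factor. Let D ∈ M_ℓ(ℍ) be the diagonal matrix with r diagonal entries equal to 1 and ℓ − r diagonal entries equal to −1, and let τ be the involution of the ℝ-algebra M_ℓ(ℍ) given by τ(x) = D⁻¹ · x̄ᵀ · D, where x̄ᵀ is the quaternionic conjugate transpose. Then there exists an injective ℝ-algebra homomorphism ι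 : E → M_ℓ(ℍ) such that ι(σ(a)) = τ(ι(a)) for all a ∈ E. -/
/-- The real étale algebra `ℂ^β × (ℂ × ℂ)^γ`. -/
abbrev RealEtaleAlgC (β γ : ℕ) : Type := (Fin β → ℂ) × (Fin γ → ℂ × ℂ)

/-- The involution of `ℂ^β × (ℂ × ℂ)^γ`: complex conjugation on each `ℂ` factor and the
coordinate switch on each `ℂ × ℂ` factor. -/
def sigmaC (β γ : ℕ) : RealEtaleAlgC β γ → RealEtaleAlgC β γ :=
  fun x => (fun i => (starRingEnd ℂ) (x.1 i), fun i => ((x.2 i).2, (x.2 i).1))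

/-- The diagonal matrix `D ∈ M_ℓ(ℍ)` with `r` diagonal entries `1` and `ℓ - r` diagonal
entries `-1`. -/
noncomputable def quatSignMatrix (ℓ r : ℕ) : Matrix (Fin ℓ) (Fin ℓ) (Quaternion ℝ) :=
  Matrix.diagonal fun i => if (i : ℕ) < r then 1 else -1

/-!
A Hermitian plane of signature `(1, -1)` splits into two complementary isotropic lines, and the
corresponding idempotents `e` and `1 - e` are exchanged by the adjoint involution. Hence
`(u, v) ↦ u e + v̄ (1 - e)` carries the switch on `ℂ × ℂ` to the adjoint involution, while `ℂ` with
conjugation acts by scalars on a line of either sign. Since `γ ≤ min r (ℓ - r)`, the form `D` is an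
orthogonal sum of `γ` such planes and `β` lines, which realizes `(E, σ)` in `M_ℓ(ℂ)`; the inclusion
`ℂ ⊆ ℍ` respects conjugation and gives the embedding into `M_ℓ(ℍ)`.
-/

open Matrix

section SignAdjoint

variable {n A : Type*} [DecidableEq n] [Ring A]

variable (A) in
/-- The Gram matrix of the diagonal form with signs `ε`. -/
def signMatrix (ε : n → ℤˣ) : Matrix n n A :=
  diagonal fun i => ((ε i : ℤ) : A)

variable [Fintype n]

theorem signMatrix_mul_self (ε : n → ℤˣ) : signMatrix A ε * signMatrix A ε = 1 := by
  simp only [signMatrix, diagonal_mul_diagonal, ← Int.cast_mul, ← Units.val_mul,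
    Int.units_mul_self, Units.val_one, Int.cast_one, diagonal_one]

theorem ringInverse_signMatrix (ε : n → ℤˣ) :
    Ring.inverse (signMatrix A ε) = signMatrix A ε :=
  Ring.inverse_unit ⟨_, _, signMatrix_mul_self ε, signMatrix_mul_self ε⟩

variable [StarRing A]

/-- The involution of the matrix algebra adjoint to the Hermitian form `signMatrix A ε`. -/
noncomputable def signAdjoint (ε : n → ℤˣ) (M : Matrix n n A) : Matrix n n A :=
  Ring.inverse (signMatrix A ε) * Mᴴ * signMatrix A ε

theorem signAdjoint_apply (ε : n → ℤˣ) (M : Matrix n n A) (i j : n) :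
    signAdjoint ε M i j = ((ε i : ℤ) : A) * star (M j i) * ((ε j : ℤ) : A) := by
  rw [signAdjoint, ringInverse_signMatrix, signMatrix, mul_diagonal, diagonal_mul,
    conjTranspose_apply]

theorem signAdjoint_signAdjoint (ε : n → ℤˣ) (M : Matrix n n A) :
    signAdjoint ε (signAdjoint ε M) = M := by
  ext i j
  obtain hi | hi := Int.units_eq_one_or (ε i) <;> obtain hj | hj := Int.units_eq_one_or (ε j) <;>
    simp [signAdjoint_apply, hi, hj]

theorem signAdjoint_add (ε : n → ℤˣ) (M N : Matrix n n A) :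
    signAdjoint ε (M + N) = signAdjoint ε M + signAdjoint ε N := by
  simp only [signAdjoint, conjTranspose_add, mul_add, add_mul]

theorem signAdjoint_smul {S : Type*} [Star S] [SMul S A] [StarModule S A] [IsScalarTower S A A]
    [SMulCommClass S A A] (ε : n → ℤˣ) (c : S) (M : Matrix n n A) :
    signAdjoint ε (c • M) = star c • signAdjoint ε M := by
  ext i j
  simp only [signAdjoint_apply, Matrix.smul_apply, star_smul, mul_smul_comm, smul_mul_assoc]

theorem signAdjoint_diagonal (ε : n → ℤˣ) (d : n → A) :
    signAdjoint ε (diagonal d) = diagonal (star d) := by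
  ext i j
  obtain rfl | hij := eq_or_ne i j
  · obtain h | h := Int.units_eq_one_or (ε i) <;> simp [signAdjoint_apply, h]
  · simp [signAdjoint_apply, hij, hij.symm]

theorem signAdjoint_map {B F : Type*} [Ring B] [StarRing B] [FunLike F A B] [RingHomClass F A B]
    [StarHomClass F A B] (f : F) (ε : n → ℤˣ) (M : Matrix n n A) :
    signAdjoint ε (M.map f) = (signAdjoint ε M).map f := by
  ext i j
  simp only [signAdjoint_apply, map_apply, map_mul, map_intCast, map_star]

theorem signAdjoint_reindex {m : Type*} [Fintype m] [DecidableEq m] (e : m ≃ n) (ε : n → ℤˣ)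
    (M : Matrix m m A) :
    signAdjoint ε (reindex e e M) = reindex e e (signAdjoint (ε ∘ e) M) := by
  ext i j
  simp [signAdjoint_apply]

theorem signAdjoint_fromBlocks {m : Type*} [Fintype m] [DecidableEq m] (ε : n ⊕ m → ℤˣ)
    (M : Matrix n n A) (N : Matrix m m A) :
    signAdjoint ε (fromBlocks M 0 0 N) =
      fromBlocks (signAdjoint (ε ∘ Sum.inl) M) 0 0 (signAdjoint (ε ∘ Sum.inr) N) := by
  ext (i | i) (j | j) <;> simp [signAdjoint_apply]

theorem signAdjoint_blockDiagonal {q : Type*} [Fintype q] [DecidableEq q] (ε : n → ℤˣ)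
    (M : q → Matrix n n A) :
    signAdjoint (ε ∘ Prod.fst) (blockDiagonal M) = blockDiagonal fun k => signAdjoint ε (M k) := by
  ext ⟨i, k⟩ ⟨j, l⟩
  obtain rfl | hkl := eq_or_ne k l
  · simp [signAdjoint_apply]
  · simp [signAdjoint_apply, blockDiagonal_apply_ne, hkl, hkl.symm]

end SignAdjoint

section HyperbolicPlane

variable (K : Type*) [CommRing K] [Invertible (2 : K)]

/-- The projection onto the isotropic line spanned by `(1, 1)` along the isotropic line spanned by
`(1, -1)`, in the plane with form `diag (1, -1)`. The two basis vectors are indexed by their signs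
in `ℤˣ`, so that the form is `signMatrix K id`. -/
def isotropicIdempotent : Matrix ℤˣ ℤˣ K :=
  of fun _ _ => ⅟2

theorem isIdempotentElem_isotropicIdempotent : IsIdempotentElem (isotropicIdempotent K) := by
  ext i j
  simp [isotropicIdempotent, mul_apply]

variable [StarRing K]

theorem star_invOf_two : star (⅟2 : K) = ⅟2 := by
  refine (invOf_eq_right_inv ?_).symm
  calc 2 * star (⅟2 : K) = star (⅟2 * 2) := by rw [star_mul, star_ofNat]
    _ = 1 := by rw [invOf_mul_self, star_one]

theorem isHermitian_isotropicIdempotent : (isotropicIdempotent K).IsHermitian :=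
  Matrix.ext fun _ _ => star_invOf_two K

theorem signAdjoint_isotropicIdempotent :
    signAdjoint id (isotropicIdempotent K) = 1 - isotropicIdempotent K := by
  ext i j
  rw [signAdjoint_apply, ← conjTranspose_apply, (isHermitian_isotropicIdempotent K).eq]
  obtain rfl | rfl := Int.units_eq_one_or i <;> obtain rfl | rfl := Int.units_eq_one_or j <;>
    simp [isotropicIdempotent, one_apply]

variable (R : Type*) [CommRing R] [StarRing R] [TrivialStar R] [Algebra R K] [StarModule R K]

/-- The embedding of `K × K` into `2 × 2` matrices given by two complementary isotropic lines of a
hyperbolic plane. The second factor acts through `star`, so that the adjoint involution of the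
plane restricts to the switch of factors. -/
def hyperbolicHom : K × K →ₐ[R] Matrix ℤˣ ℤˣ K :=
  AlgHom.ofLinearMap
    { toFun := fun a => a.1 • isotropicIdempotent K + star a.2 • (1 - isotropicIdempotent K)
      map_add' := fun a b => by
        simp only [Prod.fst_add, Prod.snd_add, star_add, add_smul]
        abel
      map_smul' := fun c a => by
        simp only [Prod.smul_fst, Prod.smul_snd, star_smul, star_trivial, smul_assoc, smul_add,
          RingHom.id_apply] }
    (by simp)
    (fun a b => by
      have he := isIdempotentElem_isotropicIdempotent K
      simp [add_mul, mul_add, smul_smul, he.eq, he.one_sub.eq, he.mul_one_sub_self,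
        he.one_sub_mul_self, mul_comm])

theorem hyperbolicHom_apply (a : K × K) :
    hyperbolicHom K R a =
      a.1 • isotropicIdempotent K + star a.2 • (1 - isotropicIdempotent K) :=
  rfl

theorem hyperbolicHom_injective : Function.Injective (hyperbolicHom K R) := by
  have fst_eq (a : K × K) : a.1 = hyperbolicHom K R a 1 1 + hyperbolicHom K R a 1 (-1) := by
    simp only [hyperbolicHom_apply, isotropicIdempotent, smul_of, Matrix.add_apply, of_apply,
      Pi.smul_apply, smul_eq_mul, Matrix.smul_apply, Matrix.sub_apply, one_apply, ↓reduceIte,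
      units_ne_neg_self]
    linear_combination (star a.2 - a.1) * mul_invOf_self (2 : K)
  have star_snd_eq (a : K × K) :
      star a.2 = hyperbolicHom K R a 1 1 - hyperbolicHom K R a 1 (-1) := by
    simp only [hyperbolicHom_apply, isotropicIdempotent, smul_of, Matrix.add_apply, of_apply,
      Pi.smul_apply, smul_eq_mul, Matrix.smul_apply, Matrix.sub_apply, one_apply, ↓reduceIte,
      units_ne_neg_self]
    ring
  intro a b hab
  refine Prod.ext ?_ (star_injective ?_)
  · rw [fst_eq a, hab, ← fst_eq b]
  · rw [star_snd_eq a, hab, ← star_snd_eq b]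

theorem hyperbolicHom_swap (a : K × K) :
    hyperbolicHom K R a.swap = signAdjoint id (hyperbolicHom K R a) := by
  have hadj := signAdjoint_isotropicIdempotent K
  rw [hyperbolicHom_apply, hyperbolicHom_apply, signAdjoint_add, signAdjoint_smul,
    signAdjoint_smul, ← hadj, signAdjoint_signAdjoint, star_star, add_comm]
  rfl

end HyperbolicPlane

section EtaleEmbedding

variable {p q : Type*} [Fintype p] [DecidableEq p] [Fintype q] [DecidableEq q]
variable (K : Type*) [CommRing K] [Invertible (2 : K)] [StarRing K]
variable (R : Type*) [CommRing R] [StarRing R] [TrivialStar R] [Algebra R K] [StarModule R K]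

/-- The embedding of the étale algebra `K ^ p × (K × K) ^ q` in the matrix algebra of an orthogonal
sum of hyperbolic planes indexed by `q` and lines indexed by `p`. -/
def etaleHom :
    (p → K) × (q → K × K) →ₐ[R] Matrix (ℤˣ × q ⊕ p) (ℤˣ × q ⊕ p) K :=
  AlgHom.ofLinearMap
    { toFun := fun a =>
        fromBlocks (blockDiagonal fun k => hyperbolicHom K R (a.2 k)) 0 0 (diagonal a.1)
      map_add' := fun a b => by
        simp [fromBlocks_add, ← blockDiagonal_add, Pi.add_def]
      map_smul' := fun c a => by
        simp [fromBlocks_smul, ← blockDiagonal_smul, ← diagonal_smul, Pi.smul_def] }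
    (by simp [← Pi.one_def])
    (fun a b => by simp [fromBlocks_multiply, ← blockDiagonal_mul])

theorem etaleHom_apply (a : (p → K) × (q → K × K)) :
    etaleHom K R a =
      fromBlocks (blockDiagonal fun k => hyperbolicHom K R (a.2 k)) 0 0 (diagonal a.1) :=
  rfl

theorem etaleHom_injective : Function.Injective (etaleHom (p := p) (q := q) K R) := by
  intro a b hab
  obtain ⟨hplanes, -, -, hlines⟩ := fromBlocks_inj.1 hab
  refine Prod.ext (diagonal_injective hlines) (funext fun k => ?_)
  exact hyperbolicHom_injective K R (congrFun (blockDiagonal_injective hplanes) k)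

theorem etaleHom_star_swap (ε : ℤˣ × q ⊕ p → ℤˣ) (hε : ε ∘ Sum.inl = Prod.fst)
    (a : (p → K) × (q → K × K)) :
    etaleHom K R (star a.1, Prod.swap ∘ a.2) = signAdjoint ε (etaleHom K R a) := by
  have hplanes := signAdjoint_blockDiagonal id fun k => hyperbolicHom K R (a.2 k)
  rw [Function.id_comp] at hplanes
  rw [etaleHom_apply, etaleHom_apply, signAdjoint_fromBlocks, hε, hplanes, signAdjoint_diagonal]
  simp only [Function.comp_apply, hyperbolicHom_swap]

end EtaleEmbedding

section Signature

variable {p q n : Type*} [Fintype p] [Fintype q] [Fintype n]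

theorem exists_equiv_sum_extending {m : Type*} [Fintype m] (f : m ↪ n)
    (hcard : Fintype.card m + Fintype.card p = Fintype.card n) :
    ∃ e : m ⊕ p ≃ n, ∀ x, e (Sum.inl x) = f x := by
  classical
  have hcompl : Fintype.card p = Fintype.card ↥(Set.range f)ᶜ := by
    rw [Fintype.card_compl_set, Set.card_range_of_injective f.injective]
    omega
  exact ⟨(Equiv.sumCongr (Equiv.ofInjective f f.injective) (Fintype.equivOfCardEq hcompl)).trans
    (Equiv.Set.sumCompl _), fun _ => rfl⟩

theorem exists_equiv_hyperbolic_sum (ε : n → ℤˣ)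
    (hcard : Fintype.card p + 2 * Fintype.card q = Fintype.card n)
    (hε : ∀ u, Fintype.card q ≤ Fintype.card {i // ε i = u}) :
    ∃ e : ℤˣ × q ⊕ p ≃ n, (ε ∘ e) ∘ Sum.inl = Prod.fst := by
  have hemb (u : ℤˣ) : Nonempty (q ↪ {i // ε i = u}) :=
    Function.Embedding.nonempty_of_card_le (hε u)
  let g (u : ℤˣ) := (hemb u).some
  let f : ℤˣ × q ↪ n :=
    ⟨fun x => g x.1 x.2, by
      rintro ⟨u, k⟩ ⟨v, l⟩ h
      obtain rfl : u = v := (g u k).2.symm.trans ((congrArg ε h).trans (g v l).2)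
      exact congrArg (Prod.mk u) ((g u).injective (Subtype.ext h))⟩
  obtain ⟨e, he⟩ := exists_equiv_sum_extending (p := p) f (by
    rw [Fintype.card_prod, Fintype.card_units_int]; omega)
  refine ⟨e, funext fun x => ?_⟩
  simp only [Function.comp_apply, he]
  exact (g x.1 x.2).2

end Signature

theorem statement14_general {R K A p q n : Type*} [CommRing R] [StarRing R] [TrivialStar R]
    [CommRing K] [StarRing K] [Invertible (2 : K)] [Algebra R K] [StarModule R K]
    [Ring A] [StarRing A] [Algebra R A]
    [Fintype p] [Fintype q] [Fintype n] [DecidableEq n]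
    (f : K →⋆ₐ[R] A) (hf : Function.Injective f) (ε : n → ℤˣ)
    (hcard : Fintype.card p + 2 * Fintype.card q = Fintype.card n)
    (hε : ∀ u, Fintype.card q ≤ Fintype.card {i // ε i = u}) :
    ∃ ι : (p → K) × (q → K × K) →ₐ[R] Matrix n n A,
      Function.Injective ι ∧
        ∀ a, ι (star a.1, Prod.swap ∘ a.2) =
          Ring.inverse (signMatrix A ε) * (ι a)ᴴ * signMatrix A ε := by
  classical
  obtain ⟨e, he⟩ := exists_equiv_hyperbolic_sum (p := p) ε hcard hε
  refine ⟨(reindexAlgEquiv R A e).toAlgHom.comp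
    (f.toAlgHom.mapMatrix.comp (etaleHom K R)), ?_, fun a => ?_⟩
  · exact (reindexAlgEquiv R A e).injective.comp
      ((map_injective hf).comp (etaleHom_injective K R))
  · change reindex e e ((etaleHom K R _).map f) =
      signAdjoint ε (reindex e e ((etaleHom K R a).map f))
    rw [signAdjoint_reindex, signAdjoint_map, etaleHom_star_swap K R (ε ∘ e) he]

section Quaternion

/-- The inclusion `ℂ ⊆ ℍ` as a morphism of algebras with involution. -/
noncomputable def complexToQuaternion : ℂ →⋆ₐ[ℝ] Quaternion ℝ where
  __ := Quaternion.ofComplex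
  map_star' z := by ext <;> simp

/-- The signs of the diagonal of `quatSignMatrix ℓ r`. -/
def initialSigns (ℓ r : ℕ) (i : Fin ℓ) : ℤˣ :=
  if (i : ℕ) < r then 1 else -1

theorem signMatrix_initialSigns (ℓ r : ℕ) :
    signMatrix (Quaternion ℝ) (initialSigns ℓ r) = quatSignMatrix ℓ r := by
  refine congrArg diagonal (funext fun i => ?_)
  by_cases hi : (i : ℕ) < r <;> simp [initialSigns, hi]

theorem min_le_card_initialSigns (ℓ r : ℕ) (u : ℤˣ) :
    min r (ℓ - r) ≤ Fintype.card {i // initialSigns ℓ r i = u} := by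
  have hpos : Fintype.card {i : Fin ℓ // (i : ℕ) < r} = min ℓ r := by
    rw [Fintype.card_subtype, Fin.card_filter_val_lt]
  have hneg : Fintype.card {i : Fin ℓ // ¬(i : ℕ) < r} = ℓ - min ℓ r := by
    rw [Fintype.card_subtype_compl, hpos, Fintype.card_fin]
  obtain rfl | rfl := Int.units_eq_one_or u
  · have hiff (i : Fin ℓ) : initialSigns ℓ r i = 1 ↔ (i : ℕ) < r := by simp [initialSigns]
    simp only [hiff, hpos]
    omega
  · have hiff (i : Fin ℓ) : initialSigns ℓ r i = -1 ↔ ¬(i : ℕ) < r := by simp [initialSigns]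
    simp only [hiff, hneg]
    omega

end Quaternion

/-- Let `ℍ` be the real quaternions, `ℓ ≥ 1`, `0 ≤ r ≤ ℓ`, and `β, γ`
nonnegative integers with `β + 2γ = ℓ` and `γ ≤ min r (ℓ - r)`.  Let `(E, σ)` be the real étale
algebra with involution `ℂ^β × (ℂ × ℂ)^γ`, let `D ∈ M_ℓ(ℍ)` be the diagonal matrix with `r`
entries `1` and `ℓ - r` entries `-1`, and let `τ (x) = D⁻¹ * x̄ᵀ * D` (where `x̄ᵀ = xᴴ` is the
quaternionic conjugate transpose).  Then there is an injective `ℝ`-algebra homomorphism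
`ι : E → M_ℓ(ℍ)` with `ι (σ a) = τ (ι a)` for all `a ∈ E`. -/
theorem statement14 (ℓ r β γ : ℕ) (hℓ : 1 ≤ ℓ) (hr : r ≤ ℓ)
    (hsum : β + 2 * γ = ℓ) (hγ : γ ≤ min r (ℓ - r)) :
    ∃ ι : RealEtaleAlgC β γ →ₐ[ℝ] Matrix (Fin ℓ) (Fin ℓ) (Quaternion ℝ),
      Function.Injective ι ∧
        ∀ a : RealEtaleAlgC β γ,
          ι (sigmaC β γ a) =
            Ring.inverse (quatSignMatrix ℓ r) * Matrix.conjTranspose (ι a) * quatSignMatrix ℓ r := by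
  obtain ⟨ι, hι, hσ⟩ := statement14_general (p := Fin β) (q := Fin γ) complexToQuaternion
    complexToQuaternion.toAlgHom.toRingHom.injective (initialSigns ℓ r) (by simpa using hsum)
    fun u => by simpa using hγ.trans (min_le_card_initialSigns ℓ r u)
  exact ⟨ι, hι, signMatrix_initialSigns ℓ r ▸ hσ⟩
end
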